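/- Let q > 2 and let u, w : ℝ/ℤ → ℝⁿ be C¹ curves with finite W^{1-1/q,q} seminorms of their derivatives, where u is embedded and regular with bil(u) < ∞. Then the function t ↦ TP(u + t w) is differentiable at t = 0, its derivative equals δTP(u)[w] = M(u; u, w) + M(u; w, u) − 2 A(u; u, w), and there is a constant C > 0 depending only on n and q such that |δTP(u)[w]| ≤ C · (bil u)^{2q+2} · ‖u'‖_{L^∞}^{q+1} · ‖u'‖_{W^{1-1/q,q}}^q · ‖w'‖_{W^{1-1/q,q}}. -/

import Mathlib

open MeasureTheory Set Filter
open scoped RealInnerProductSpace ENNReal Topology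

noncomputable section

/-- The distance on the circle `ℝ/ℤ` between the points represented by `x` and `y`. -/
def circDist (x y : ℝ) : ℝ := ‖((x - y : ℝ) : AddCircle (1 : ℝ))‖

/-- The representative of `z` modulo `1` lying in `(-1/2, 1/2]`. -/
def wrap (z : ℝ) : ℝ := 1 / 2 - Int.fract (1 / 2 - z)

/-- Squared wedge norm `|a ∧ b|² = |a|²|b|² - ⟨a,b⟩²`. -/
def wedgeSq {n : ℕ} (a b : EuclideanSpace ℝ (Fin n)) : ℝ :=
  ‖a‖ ^ 2 * ‖b‖ ^ 2 - ⟪a, b⟫ ^ 2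

/-- Wedge inner product `⟨a∧b, c∧d⟩ = ⟨a,c⟩⟨b,d⟩ - ⟨a,d⟩⟨b,c⟩`. -/
def wedgeInner {n : ℕ} (a b c d : EuclideanSpace ℝ (Fin n)) : ℝ :=
  ⟪a, c⟫ * ⟪b, d⟫ - ⟪a, d⟫ * ⟪b, c⟫

/-- Fundamental domain for double integrals over `(ℝ/ℤ)²`. -/
def unitSq : Set (ℝ × ℝ) := Ioc (0 : ℝ) 1 ×ˢ Ioc (0 : ℝ) 1

/-- The tangent-point functional `TP` (extended-real-valued). -/
def TPe {n : ℕ} (q : ℝ) (u : ℝ → EuclideanSpace ℝ (Fin n)) : ℝ≥0∞ :=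
  ENNReal.ofReal (1 / q) *
    ∫⁻ p in unitSq, ENNReal.ofReal
      (wedgeSq (deriv u p.2) (u p.1 - u p.2) ^ (q / 2) / ‖u p.1 - u p.2‖ ^ (2 * q))

/-- The tangent-point functional `TP` (real-valued). -/
def TPr {n : ℕ} (q : ℝ) (u : ℝ → EuclideanSpace ℝ (Fin n)) : ℝ := (TPe q u).toReal

/-- The `q`-th power of the Sobolev–Slobodeckii seminorm `[f]_{W^{s,q}}` on `ℝ/ℤ`. -/
def sobSemPow {n : ℕ} (s q : ℝ) (f : ℝ → EuclideanSpace ℝ (Fin n)) : ℝ≥0∞ :=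
  ∫⁻ p in unitSq, ENNReal.ofReal (‖f p.1 - f p.2‖ ^ q / circDist p.1 p.2 ^ (1 + s * q))

/-- The `W^{s,q}`-norm `‖f‖_{L^q} + [f]_{W^{s,q}}`. -/
def Wnorm {n : ℕ} (s q : ℝ) (f : ℝ → EuclideanSpace ℝ (Fin n)) : ℝ :=
  (∫ x in Ioc (0 : ℝ) 1, ‖f x‖ ^ q) ^ (1 / q) + (sobSemPow s q f).toReal ^ (1 / q)

/-- The bi-Lipschitz constant `bil(u) = sup_{x ≢ y} |x-y|_{ℝ/ℤ}/|u(x)-u(y)|`. -/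
def bil {n : ℕ} (u : ℝ → EuclideanSpace ℝ (Fin n)) : ℝ≥0∞ :=
  ⨆ (x : ℝ) (y : ℝ) (_ : circDist x y ≠ 0),
    ENNReal.ofReal (circDist x y) / ENNReal.ofReal ‖u x - u y‖

/-- The `L^∞`-norm of the derivative of `u`. -/
def linfD {n : ℕ} (u : ℝ → EuclideanSpace ℝ (Fin n)) : ℝ≥0∞ :=
  ⨆ x : ℝ, (‖deriv u x‖₊ : ℝ≥0∞)

/-- A periodic curve is embedded if it is injective on the circle `ℝ/ℤ`. -/
def Embedded {n : ℕ} (u : ℝ → EuclideanSpace ℝ (Fin n)) : Prop :=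
  ∀ x y : ℝ, u x = u y → ((x : AddCircle (1 : ℝ)) = (y : AddCircle (1 : ℝ)))

/-- A curve is regular if `min_{ℝ/ℤ} |u'| > 0`. -/
def Regular {n : ℕ} (u : ℝ → EuclideanSpace ℝ (Fin n)) : Prop :=
  0 < ⨅ x : ℝ, ‖deriv u x‖

/-- Orthogonal projection of `b` onto the orthogonal complement of `ℝ a`. -/
def projPerp {n : ℕ} (a b : EuclideanSpace ℝ (Fin n)) : EuclideanSpace ℝ (Fin n) :=
  b - (⟪b, a⟫ / ‖a‖ ^ 2) • a

/-- The classical tangent-point functional (extended-real-valued). -/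
def TPcle {n : ℕ} (q : ℝ) (u : ℝ → EuclideanSpace ℝ (Fin n)) : ℝ≥0∞ :=
  ENNReal.ofReal (1 / q) *
    ∫⁻ p in unitSq, ENNReal.ofReal
      (‖projPerp (deriv u p.2) (u p.1 - u p.2)‖ ^ q / ‖u p.1 - u p.2‖ ^ (2 * q) *
        (‖deriv u p.1‖ * ‖deriv u p.2‖))

/-- The integrand of the functional `M(u; v, w)`. -/
def Mintegrand {n : ℕ} (q : ℝ) (u v w : ℝ → EuclideanSpace ℝ (Fin n)) (p : ℝ × ℝ) : ℝ :=
  wedgeSq (deriv u p.2) (u p.1 - u p.2) ^ ((q - 2) / 2) / ‖u p.1 - u p.2‖ ^ (2 * q) *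
    wedgeInner (deriv u p.2) (u p.1 - u p.2) (deriv v p.2)
      (w p.1 - w p.2 - wrap (p.1 - p.2) • deriv w p.2)

/-- The functional `M(u; v, w)` appearing in the first variation of `TP`. -/
def Mfun {n : ℕ} (q : ℝ) (u v w : ℝ → EuclideanSpace ℝ (Fin n)) : ℝ :=
  ∫ p in unitSq, Mintegrand q u v w p

/-- The integrand of the functional `A(u; v, w)`. -/
def Aintegrand {n : ℕ} (q : ℝ) (u v w : ℝ → EuclideanSpace ℝ (Fin n)) (p : ℝ × ℝ) : ℝ :=
  wedgeSq (deriv u p.2) (u p.1 - u p.2) ^ (q / 2) / ‖u p.1 - u p.2‖ ^ (2 * q + 2) *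
    ⟪v p.1 - v p.2, w p.1 - w p.2⟫

/-- The functional `A(u; v, w)` appearing in the first variation of `TP`. -/
def Afun {n : ℕ} (q : ℝ) (u v w : ℝ → EuclideanSpace ℝ (Fin n)) : ℝ :=
  ∫ p in unitSq, Aintegrand q u v w p

/-- The first variation `δTP(u)[w] = M(u;u,w) + M(u;w,u) - 2A(u;u,w)`. -/
def deltaTP {n : ℕ} (q : ℝ) (u w : ℝ → EuclideanSpace ℝ (Fin n)) : ℝ :=
  Mfun q u u w + Mfun q u w u - 2 * Afun q u u w

/-- The `H²` inner product on periodic curves. -/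
def H2inner (v w : ℝ → EuclideanSpace ℝ (Fin 3)) : ℝ :=
  ∫ x in Ioc (0 : ℝ) 1,
    (⟪v x, w x⟫ + ⟪deriv v x, deriv w x⟫ + ⟪deriv (deriv v) x, deriv (deriv w) x⟫)

/-- The total energy `E(u) = (κ/2)∫|u''|² + ρ TP(u)`. -/
def energyE (κ ρ q : ℝ) (u : ℝ → EuclideanSpace ℝ (Fin 3)) : ℝ :=
  κ / 2 * (∫ x in Ioc (0 : ℝ) 1, ‖deriv (deriv u) x‖ ^ 2) + ρ * TPr q u

/-!
Since `u' ∧ u' = 0`, the chord `u(x) - u(y)` in the tangent-point integrand may be replaced by the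
Taylor remainder `u(x) - u(y) - (x - y) u'(y)`. Divided by `|x - y|²`, this remainder is an average
of difference quotients of `u'`, so by Jensen's inequality and Tonelli's theorem its `L^q` norm is
at most the `W^{1-1/q,q}` seminorm of `u'`. As long as `u + t w` stays uniformly bi-Lipschitz, this
gives an integrable bound for the `t`-derivative of the integrand, hence differentiation under the
integral sign. Two Taylor remainders, of `u` and of `w`, appear in `M`, and Hölder's inequality with
exponents `q / (q - 1)` and `q` bounds it by their `L^q` norms. The sup norm of `w'` enters through
`M(u; w, u)` and `A`; for `q > 2` it is controlled by the Morrey embedding of `W^{1-1/q,q}`,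
obtained by telescoping the means of `w'` over dyadically shrinking intervals.
-/

section CircleDistance

lemma wrap_eq_add_int (z : ℝ) : ∃ k : ℤ, wrap z = z + k :=
  ⟨⌊1 / 2 - z⌋, by linarith [wrap.eq_def z, Int.floor_add_fract (1 / 2 - z)]⟩

lemma abs_wrap_le (z : ℝ) : |wrap z| ≤ 1 / 2 := by
  have := Int.fract_nonneg (1 / 2 - z)
  have := Int.fract_lt_one (1 / 2 - z)
  rw [wrap, abs_le]
  constructor <;> linarith

lemma wrap_of_mem_Ioc {z : ℝ} (hz : z ∈ Ioc (-(1 / 2)) (1 / 2)) : wrap z = z := by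
  rw [wrap, Int.fract_eq_self.2 ⟨by linarith [hz.2], by linarith [hz.1]⟩]
  ring

lemma wrap_add_one (z : ℝ) : wrap (z + 1) = wrap z := by
  rw [wrap, wrap, show 1 / 2 - (z + 1) = 1 / 2 - z - 1 by ring, Int.fract_sub_one]

lemma wrap_add_one_sub (x y : ℝ) : wrap (x + 1 - y) = wrap (x - y) := by
  rw [← sub_add_eq_add_sub, wrap_add_one]

lemma wrap_sub_add_one (x y : ℝ) : wrap (x - (y + 1)) = wrap (x - y) := by
  rw [← wrap_add_one (x - (y + 1)), sub_add_eq_sub_sub, sub_add_cancel]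

lemma measurable_wrap : Measurable wrap :=
  measurable_const.sub (measurable_const.sub measurable_id).fract

lemma circDist_nonneg (x y : ℝ) : 0 ≤ circDist x y := norm_nonneg _

lemma circDist_eq_abs_wrap (x y : ℝ) : circDist x y = |wrap (x - y)| := by
  have coe_sub_eq : ((x - y : ℝ) : AddCircle (1 : ℝ)) = (wrap (x - y) : ℝ) := by
    obtain ⟨k, hk⟩ := wrap_eq_add_int (x - y)
    rw [hk, AddCircle.coe_add, (AddCircle.coe_eq_zero_iff 1 (x := (k : ℝ))).2 ⟨k, by simp⟩,
      add_zero]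
  rw [circDist, coe_sub_eq, AddCircle.norm_coe_eq_abs_iff _ one_ne_zero]
  simpa using abs_wrap_le (x - y)

lemma circDist_add_left_self {s : ℝ} (hs : s ∈ Ioc (-(1 / 2)) (1 / 2)) (y : ℝ) :
    circDist (y + s) y = |s| := by
  rw [circDist_eq_abs_wrap, add_sub_cancel_left, wrap_of_mem_Ioc hs]

lemma circDist_le_abs_sub (x y : ℝ) : circDist x y ≤ |x - y| := by
  rw [circDist, UnitAddCircle.norm_eq]
  simpa using round_le (x - y) 0

lemma circDist_add_one_left (x y : ℝ) : circDist (x + 1) y = circDist x y := by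
  rw [circDist_eq_abs_wrap, circDist_eq_abs_wrap, wrap_add_one_sub]

lemma circDist_add_one_right (x y : ℝ) : circDist x (y + 1) = circDist x y := by
  rw [circDist_eq_abs_wrap, circDist_eq_abs_wrap, wrap_sub_add_one]

lemma measurable_circDist : Measurable fun p : ℝ × ℝ => circDist p.1 p.2 := by
  simp only [circDist_eq_abs_wrap]
  exact (measurable_wrap.comp (measurable_fst.sub measurable_snd)).abs

variable {α : Type*} {f : ℝ → α}

lemma apply_add_wrap_sub (hf : f.Periodic 1) (x y : ℝ) : f (y + wrap (x - y)) = f x := by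
  obtain ⟨k, hk⟩ := wrap_eq_add_int (x - y)
  rw [hk, show y + (x - y + k) = x + k * 1 by ring]
  exact hf.int_mul k x

lemma eq_of_circDist_eq_zero (hf : f.Periodic 1) {x y : ℝ} (h : circDist x y = 0) :
    f x = f y := by
  rw [circDist_eq_abs_wrap, abs_eq_zero] at h
  rw [← apply_add_wrap_sub hf x y, h, add_zero]

end CircleDistance

section ChangeOfVariables

lemma lintegral_Ioc_comp_add_mul (g : ℝ → ℝ≥0∞) {h : ℝ} (hh : 0 < h) (a α β : ℝ) :
    ∫⁻ s in Ioc α β, g (a + h * s) =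
      ENNReal.ofReal h⁻¹ * ∫⁻ x in Ioc (a + h * α) (a + h * β), g x := by
  have emb : MeasurableEmbedding fun s => a + h * s :=
    (measurableEmbedding_addLeft a).comp (measurableEmbedding_mulLeft₀ hh.ne')
  have map_volume : volume.map (fun s => a + h * s) = ENNReal.ofReal h⁻¹ • volume := by
    rw [← Function.comp_def (a + ·) (h * ·),
      ← Measure.map_map (measurable_const_add a) (measurable_const_mul h),
      Real.map_volume_mul_left hh.ne', Measure.map_smul, map_add_left_eq_self,
      abs_of_pos (inv_pos.2 hh)]
  have preimage_Ioc : (fun s => a + h * s) ⁻¹' Ioc (a + h * α) (a + h * β) = Ioc α β := by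
    ext s
    simp [hh]
  rw [← emb.lintegral_map g, ← preimage_Ioc, ← emb.restrict_map, map_volume,
    Measure.restrict_smul, lintegral_smul_measure, smul_eq_mul]

lemma lintegral_Ioc_comp_const_add (g : ℝ → ℝ≥0∞) (a α β : ℝ) :
    ∫⁻ s in Ioc α β, g (a + s) = ∫⁻ x in Ioc (a + α) (a + β), g x := by
  simpa using lintegral_Ioc_comp_add_mul g one_pos a α β

lemma lintegral_Ioc_add_one_eq {f : ℝ → ℝ≥0∞} (hf : f.Periodic 1) (s t : ℝ) :
    ∫⁻ x in Ioc s (s + 1), f x = ∫⁻ x in Ioc t (t + 1), f x := by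
  have eq_lintegral_lift (r : ℝ) :
      ∫⁻ x in Ioc r (r + 1), f x = ∫⁻ b : AddCircle (1 : ℝ), hf.lift b := by
    rw [← AddCircle.lintegral_preimage 1 r]
    rfl
  rw [eq_lintegral_lift, eq_lintegral_lift]

lemma lintegral_unitSq_eq {g : ℝ × ℝ → ℝ≥0∞} (hg : Measurable g)
    (hx : ∀ x y, g (x + 1, y) = g (x, y)) (hy : ∀ x y, g (x, y + 1) = g (x, y))
    (s : ℝ → ℝ) (t : ℝ) :
    ∫⁻ p in unitSq, g p = ∫⁻ y in Ioc t (t + 1), ∫⁻ x in Ioc (s y) (s y + 1), g (x, y) := by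
  have inner_eq (y : ℝ) :
      ∫⁻ x in Ioc (s y) (s y + 1), g (x, y) = ∫⁻ x in Ioc 0 1, g (x, y) := by
    simpa using lintegral_Ioc_add_one_eq (f := fun x => g (x, y)) (fun x => hx x y) (s y) 0
  have outer_periodic : Function.Periodic (fun y => ∫⁻ x in Ioc 0 1, g (x, y)) 1 := fun y => by
    simp only [hy]
  simp only [inner_eq]
  rw [lintegral_Ioc_add_one_eq outer_periodic t 0, zero_add, unitSq, Measure.volume_eq_prod,
    ← Measure.prod_restrict, lintegral_prod_symm _ hg.aemeasurable]

end ChangeOfVariables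

section Jensen

variable {α β : Type*} [MeasurableSpace α] [MeasurableSpace β] {q : ℝ}
  {E : Type*} [NormedAddCommGroup E] [NormedSpace ℝ E]

lemma lintegral_rpow_le_lintegral_rpow {μ : Measure α} [IsProbabilityMeasure μ] (hq : 1 ≤ q)
    {f : α → ℝ≥0∞} (hf : AEMeasurable f μ) : (∫⁻ x, f x ∂μ) ^ q ≤ ∫⁻ x, f x ^ q ∂μ := by
  have h := eLpNorm'_le_eLpNorm'_of_exponent_le one_pos hq μ hf.aestronglyMeasurable
  simp only [eLpNorm', enorm_eq_self, ENNReal.rpow_one, div_one] at h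
  rwa [one_div, ENNReal.le_rpow_inv_iff (by linarith)] at h

lemma enorm_integral_rpow_le {μ : Measure α} [IsProbabilityMeasure μ] (hq : 1 ≤ q) {f : α → E}
    (hf : AEStronglyMeasurable f μ) : ‖∫ x, f x ∂μ‖ₑ ^ q ≤ ∫⁻ x, ‖f x‖ₑ ^ q ∂μ :=
  (ENNReal.rpow_le_rpow (enorm_integral_le_lintegral_enorm f) (by linarith)).trans
    (lintegral_rpow_le_lintegral_rpow hq hf.enorm)

lemma enorm_integral_sub_integral_rpow_le {μ : Measure α} {ν : Measure β}
    [IsProbabilityMeasure μ] [IsProbabilityMeasure ν] (hq : 1 ≤ q) {f : α → E} {g : β → E}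
    (hf : Integrable f μ) (hg : Integrable g ν) :
    ‖∫ x, f x ∂μ - ∫ y, g y ∂ν‖ₑ ^ q ≤ ∫⁻ p, ‖f p.1 - g p.2‖ₑ ^ q ∂(μ.prod ν) := by
  have h := enorm_integral_rpow_le hq ((hf.comp_fst ν).sub (hg.comp_snd μ)).aestronglyMeasurable
  simpa [integral_sub (hf.comp_fst ν) (hg.comp_snd μ), integral_fun_fst, integral_fun_snd] using h

instance isProbabilityMeasure_volume_restrict_Ioc_zero_one :
    IsProbabilityMeasure (volume.restrict (Ioc (0 : ℝ) 1)) :=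
  ⟨by simp⟩

end Jensen

section DifferenceQuotients

variable {E : Type*} [NormedAddCommGroup E]

/-- The difference quotient `|f(x) - f(y)| / |x - y|` on the circle, equal to `0` on the
diagonal. -/
def diffQuot (f : ℝ → E) (p : ℝ × ℝ) : ℝ := ‖f p.1 - f p.2‖ / circDist p.1 p.2

/-- The Gagliardo energy `∬ (|f(x) - f(y)| / |x - y|)^q`, which is the `q`-th power of the
`W^{1-1/q,q}`-seminorm. -/
def gagliardoPow (q : ℝ) (f : ℝ → E) : ℝ≥0∞ := ∫⁻ p in unitSq, ‖diffQuot f p‖ₑ ^ q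

lemma sobSemPow_eq_gagliardoPow {n : ℕ} {q : ℝ} (hq : 0 < q)
    (f : ℝ → EuclideanSpace ℝ (Fin n)) : sobSemPow (1 - 1 / q) q f = gagliardoPow q f := by
  have exponent_eq : 1 + (1 - 1 / q) * q = q := by
    field_simp
    ring
  refine lintegral_congr fun p => ?_
  have hd := circDist_nonneg p.1 p.2
  rw [exponent_eq, ← Real.div_rpow (norm_nonneg _) hd, ← diffQuot,
    ← ENNReal.ofReal_rpow_of_nonneg (by unfold diffQuot; positivity) hq.le,
    Real.enorm_of_nonneg (by unfold diffQuot; positivity)]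

lemma measurable_diffQuot {f : ℝ → E} (hf : Continuous f) : Measurable (diffQuot f) := by
  have norm_sub : Continuous fun p : ℝ × ℝ => ‖f p.1 - f p.2‖ := by fun_prop
  exact norm_sub.measurable.div measurable_circDist

lemma lintegral_diffQuot_eq_gagliardoPow {f : ℝ → E} (hf : Continuous f) (hfp : f.Periodic 1)
    (q : ℝ) (s : ℝ → ℝ) (t : ℝ) :
    ∫⁻ y in Ioc t (t + 1), ∫⁻ x in Ioc (s y) (s y + 1), ‖diffQuot f (x, y)‖ₑ ^ q =
      gagliardoPow q f :=
  (lintegral_unitSq_eq ((measurable_diffQuot hf).enorm.pow_const q)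
    (fun x y => by simp only [diffQuot, circDist_add_one_left, hfp x])
    (fun x y => by simp only [diffQuot, circDist_add_one_right, hfp y]) s t).symm

lemma enorm_sub_le_mul_diffQuot {f : ℝ → E} (hfp : f.Periodic 1) {x y h : ℝ}
    (hxy : |x - y| ≤ h) : ‖f x - f y‖ₑ ≤ ENNReal.ofReal h * ‖diffQuot f (x, y)‖ₑ := by
  rcases (circDist_nonneg x y).eq_or_lt with h0 | hpos
  · simp [eq_of_circDist_eq_zero hfp h0.symm]
  · have hd : circDist x y ≤ h := (circDist_le_abs_sub x y).trans hxy
    rw [← ofReal_norm, ← ofReal_norm, ← ENNReal.ofReal_mul (hpos.le.trans hd), diffQuot,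
      Real.norm_of_nonneg (by positivity), mul_div_assoc']
    refine ENNReal.ofReal_le_ofReal ((le_div_iff₀ hpos).2 ?_)
    rw [mul_comm]
    gcongr

end DifferenceQuotients

section HardyInequality

variable {E : Type*} [NormedAddCommGroup E] [NormedSpace ℝ E] {u w : ℝ → E} {q : ℝ}

lemma deriv_periodic (hup : u.Periodic 1) : (deriv u).Periodic 1 := fun x => by
  rw [← deriv_comp_add_const, funext hup]

/-- The first-order Taylor remainder `u(x) - u(y) - (x - y) u'(y)` on the circle. -/
def taylorRem (u : ℝ → E) (p : ℝ × ℝ) : E :=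
  u p.1 - u p.2 - wrap (p.1 - p.2) • deriv u p.2

/-- The second-order quotient `|u(x) - u(y) - (x - y) u'(y)| / |x - y|²` on the circle, equal to
`0` on the diagonal. -/
def taylorQuot (u : ℝ → E) (p : ℝ × ℝ) : ℝ := ‖taylorRem u p‖ / circDist p.1 p.2 ^ 2

lemma taylorQuot_nonneg (u : ℝ → E) (p : ℝ × ℝ) : 0 ≤ taylorQuot u p := by
  unfold taylorQuot
  positivity

lemma stronglyMeasurable_taylorRem (hu : ContDiff ℝ 1 u) : StronglyMeasurable (taylorRem u) := by
  have := hu.continuous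
  have := hu.continuous_deriv le_rfl
  have diff : StronglyMeasurable fun p : ℝ × ℝ => u p.1 - u p.2 :=
    (by fun_prop : Continuous _).stronglyMeasurable
  have deriv_snd : StronglyMeasurable fun p : ℝ × ℝ => deriv u p.2 :=
    (by fun_prop : Continuous _).stronglyMeasurable
  exact diff.sub ((measurable_wrap.comp
    (measurable_fst.sub measurable_snd)).stronglyMeasurable.smul deriv_snd)

lemma measurable_taylorQuot (hu : ContDiff ℝ 1 u) : Measurable (taylorQuot u) :=
  (stronglyMeasurable_taylorRem hu).norm.measurable.div (measurable_circDist.pow_const 2)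

lemma deriv_add_smul (hu : Differentiable ℝ u) (hw : Differentiable ℝ w) (t x : ℝ) :
    deriv (u + t • w) x = deriv u x + t • deriv w x :=
  ((hu x).hasDerivAt.add ((hw x).hasDerivAt.const_smul t)).deriv

lemma taylorRem_add_smul (hu : Differentiable ℝ u) (hw : Differentiable ℝ w) (t : ℝ) (p : ℝ × ℝ) :
    taylorRem (u + t • w) p = taylorRem u p + t • taylorRem w p := by
  simp only [taylorRem, deriv_add_smul hu hw, Pi.add_apply, Pi.smul_apply]
  module

lemma taylorQuot_add_smul_le (hu : Differentiable ℝ u) (hw : Differentiable ℝ w)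
    {t : ℝ} (ht : |t| ≤ 1) (p : ℝ × ℝ) :
    taylorQuot (u + t • w) p ≤ taylorQuot u p + taylorQuot w p := by
  rw [taylorQuot, taylorQuot, taylorQuot, ← add_div, taylorRem_add_smul hu hw]
  gcongr
  refine norm_add_le_of_le le_rfl ?_
  rw [norm_smul, Real.norm_eq_abs]
  exact mul_le_of_le_one_left (norm_nonneg _) ht

variable [CompleteSpace E]

lemma taylorRem_eq_smul_integral (hu : ContDiff ℝ 1 u) (hup : u.Periodic 1) (x y : ℝ) :
    taylorRem u (x, y) =
      wrap (x - y) • ∫ θ in Ioc (0 : ℝ) 1, (deriv u (y + θ * wrap (x - y)) - deriv u y) := by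
  have := hu.continuous_deriv le_rfl
  have ftc := intervalIntegral.integral_unitInterval_deriv_eq_sub (f := u) (f' := deriv u)
    (z₀ := y) (z₁ := wrap (x - y)) (by fun_prop)
    (fun t _ => (hu.differentiable one_ne_zero _).hasDerivAt)
  rw [apply_add_wrap_sub hup] at ftc
  rw [← intervalIntegral.integral_of_le zero_le_one,
    intervalIntegral.integral_sub (Continuous.intervalIntegrable (by fun_prop) _ _) (by simp),
    smul_sub, taylorRem, ← ftc]
  simp

lemma enorm_taylorQuot_rpow_le (hq : 1 ≤ q) (hu : ContDiff ℝ 1 u) (hup : u.Periodic 1) (y : ℝ)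
    {s : ℝ} (hs : s ∈ Ioc (-(1 / 2)) (1 / 2)) :
    ‖taylorQuot u (y + s, y)‖ₑ ^ q ≤
      ∫⁻ θ in Ioc (0 : ℝ) 1, ENNReal.ofReal θ * ‖diffQuot (deriv u) (y + θ * s, y)‖ₑ ^ q := by
  have := hu.continuous_deriv le_rfl
  have quot_eq : ‖taylorQuot u (y + s, y)‖ₑ =
      ‖∫ θ in Ioc (0 : ℝ) 1, |s|⁻¹ • (deriv u (y + θ * s) - deriv u y)‖ₑ := by
    rw [integral_smul, taylorQuot, taylorRem_eq_smul_integral hu hup, add_sub_cancel_left,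
      wrap_of_mem_Ioc hs, circDist_add_left_self hs, norm_smul, ← enorm_norm (_ • _), norm_smul,
      Real.norm_eq_abs, norm_inv, Real.norm_eq_abs, abs_abs]
    rcases eq_or_ne |s| 0 with h0 | h0
    · simp [h0]
    · rw [pow_two, mul_div_mul_left _ _ h0, div_eq_inv_mul]
  rw [quot_eq]
  refine (enorm_integral_rpow_le hq (by fun_prop)).trans
    (setLIntegral_mono' measurableSet_Ioc fun θ ⟨hθ0, hθ1⟩ => ?_)
  have scaled_mem : θ * s ∈ Ioc (-(1 / 2)) (1 / 2) := by
    constructor <;> nlinarith [hs.1, hs.2]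
  have enorm_eq : ‖|s|⁻¹ • (deriv u (y + θ * s) - deriv u y)‖ₑ =
      ENNReal.ofReal θ * ‖diffQuot (deriv u) (y + θ * s, y)‖ₑ := by
    rw [← Real.enorm_of_nonneg hθ0.le, ← enorm_mul, ← enorm_norm (_ • _), norm_smul, norm_inv,
      Real.norm_eq_abs, abs_abs, diffQuot, circDist_add_left_self scaled_mem, abs_mul,
      abs_of_pos hθ0]
    congr 1
    field_simp
  rw [enorm_eq, ENNReal.mul_rpow_of_nonneg _ _ (by linarith)]
  gcongr
  exact ENNReal.rpow_le_self_of_le_one (ENNReal.ofReal_le_one.2 hθ1) hq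

lemma mul_lintegral_comp_mul_le (g : ℝ → ℝ≥0∞) (y : ℝ) {θ : ℝ} (hθ : θ ∈ Ioc (0 : ℝ) 1) :
    ENNReal.ofReal θ * ∫⁻ s in Ioc (-(1 / 2)) (1 / 2), g (y + θ * s) ≤
      ∫⁻ x in Ioc (y - 1 / 2) (y - 1 / 2 + 1), g x := by
  obtain ⟨hθ0, hθ1⟩ := hθ
  rw [lintegral_Ioc_comp_add_mul g hθ0, ← mul_assoc, ← ENNReal.ofReal_mul hθ0.le,
    mul_inv_cancel₀ hθ0.ne', ENNReal.ofReal_one, one_mul]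
  exact lintegral_mono_set (Ioc_subset_Ioc (by linarith) (by linarith))

lemma lintegral_taylorQuot_rpow_le (hq : 1 ≤ q) (hu : ContDiff ℝ 1 u) (hup : u.Periodic 1) :
    ∫⁻ p in unitSq, ‖taylorQuot u p‖ₑ ^ q ≤ gagliardoPow q (deriv u) := by
  have hup' := deriv_periodic hup
  have hc' := hu.continuous_deriv le_rfl
  have hm := (measurable_diffQuot hc').enorm.pow_const q
  rw [lintegral_unitSq_eq ((measurable_taylorQuot hu).enorm.pow_const q)
      (fun x y => by simp only [taylorQuot, taylorRem, circDist_add_one_left, wrap_add_one_sub,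
        hup x])
      (fun x y => by simp only [taylorQuot, taylorRem, circDist_add_one_right, wrap_sub_add_one,
        hup y, hup' y])
      (fun y => y + -(1 / 2)) 0,
    ← lintegral_diffQuot_eq_gagliardoPow hc' hup' q (fun y => y - 1 / 2) 0]
  refine lintegral_mono fun y => ?_
  set g : ℝ → ℝ≥0∞ := fun x => ‖diffQuot (deriv u) (x, y)‖ₑ ^ q
  have hg : Measurable g := hm.comp measurable_prodMk_right
  calc ∫⁻ x in Ioc (y + -(1 / 2)) (y + -(1 / 2) + 1), ‖taylorQuot u (x, y)‖ₑ ^ q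
      = ∫⁻ s in Ioc (-(1 / 2)) (1 / 2), ‖taylorQuot u (y + s, y)‖ₑ ^ q := by
        rw [lintegral_Ioc_comp_const_add (fun x => ‖taylorQuot u (x, y)‖ₑ ^ q)]
        ring_nf
    _ ≤ ∫⁻ s in Ioc (-(1 / 2)) (1 / 2),
          ∫⁻ θ in Ioc (0 : ℝ) 1, ENNReal.ofReal θ * g (y + θ * s) :=
        setLIntegral_mono' measurableSet_Ioc fun s hs => enorm_taylorQuot_rpow_le hq hu hup y hs
    _ = ∫⁻ θ in Ioc (0 : ℝ) 1,
          ENNReal.ofReal θ * ∫⁻ s in Ioc (-(1 / 2)) (1 / 2), g (y + θ * s) := by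
        rw [lintegral_lintegral_swap (by unfold Function.uncurry; fun_prop)]
        exact lintegral_congr fun θ => lintegral_const_mul _ (by fun_prop)
    _ ≤ ∫⁻ θ in Ioc (0 : ℝ) 1, ∫⁻ x in Ioc (y - 1 / 2) (y - 1 / 2 + 1), g x :=
        setLIntegral_mono' measurableSet_Ioc fun θ hθ => mul_lintegral_comp_mul_le g y hθ
    _ = ∫⁻ x in Ioc (y - 1 / 2) (y - 1 / 2 + 1), g x := by simp

lemma memLp_taylorQuot (hq : 1 ≤ q) (hu : ContDiff ℝ 1 u) (hup : u.Periodic 1)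
    (hS : gagliardoPow q (deriv u) < ⊤) :
    MemLp (taylorQuot u) (ENNReal.ofReal q) (volume.restrict unitSq) := by
  have hq0 : 0 < q := by linarith
  refine ⟨(measurable_taylorQuot hu).aestronglyMeasurable, ?_⟩
  rw [eLpNorm_lt_top_iff_lintegral_rpow_enorm_lt_top (by simpa using hq0) ENNReal.ofReal_ne_top,
    ENNReal.toReal_ofReal hq0.le]
  exact (lintegral_taylorQuot_rpow_le hq hu hup).trans_lt hS

lemma integral_taylorQuot_rpow_le (hq : 1 ≤ q) (hu : ContDiff ℝ 1 u) (hup : u.Periodic 1)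
    (hS : gagliardoPow q (deriv u) < ⊤) :
    ∫ p in unitSq, taylorQuot u p ^ q ≤ (gagliardoPow q (deriv u)).toReal := by
  rw [integral_eq_lintegral_of_nonneg_ae
    (ae_of_all _ fun p => Real.rpow_nonneg (taylorQuot_nonneg u p) q)
    ((measurable_taylorQuot hu).pow_const q).aestronglyMeasurable]
  simp only [← ENNReal.ofReal_rpow_of_nonneg (taylorQuot_nonneg u _) (by linarith : 0 ≤ q),
    ← Real.enorm_of_nonneg (taylorQuot_nonneg u _)]
  exact ENNReal.toReal_mono hS.ne (lintegral_taylorQuot_rpow_le hq hu hup)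

end HardyInequality

section MorreyEmbedding

variable {E : Type*} [NormedAddCommGroup E] {f : ℝ → E} {q : ℝ}

lemma integrableOn_comp_add_mul (hf : Continuous f) (a h : ℝ) :
    IntegrableOn (fun θ => f (a + h * θ)) (Ioc 0 1) :=
  Continuous.integrableOn_Ioc (by fun_prop)

lemma lintegral_diffQuot_comp_le (hf : Continuous f) (hfp : f.Periodic 1) (a : ℝ) {h : ℝ}
    (h0 : 0 < h) (h1 : h ≤ 1) :
    ∫⁻ φ in Ioc (0 : ℝ) 1, ∫⁻ θ in Ioc (0 : ℝ) 1,
        ‖diffQuot f (a + h * θ, a + h / 2 * φ)‖ₑ ^ q ≤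
      ENNReal.ofReal (h / 2)⁻¹ * (ENNReal.ofReal h⁻¹ * gagliardoPow q f) := by
  have inner_eq (y : ℝ) : ∫⁻ θ in Ioc (0 : ℝ) 1, ‖diffQuot f (a + h * θ, y)‖ₑ ^ q =
      ENNReal.ofReal h⁻¹ * ∫⁻ x in Ioc (a + h * 0) (a + h * 1), ‖diffQuot f (x, y)‖ₑ ^ q :=
    lintegral_Ioc_comp_add_mul (fun x => ‖diffQuot f (x, y)‖ₑ ^ q) h0 a 0 1
  simp only [inner_eq]
  rw [lintegral_const_mul' _ _ ENNReal.ofReal_ne_top, lintegral_Ioc_comp_add_mul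
      (fun y => ∫⁻ x in Ioc (a + h * 0) (a + h * 1), ‖diffQuot f (x, y)‖ₑ ^ q) (half_pos h0),
    ← lintegral_diffQuot_eq_gagliardoPow hf hfp q (fun _ => a) a, mul_left_comm]
  gcongr <;> linarith

variable [NormedSpace ℝ E]

/-- The mean of `f` over `[a, a + h]`, written so that `h = 0` gives the value `f a`. -/
def meanFrom (f : ℝ → E) (a h : ℝ) : E := ∫ θ in Ioc (0 : ℝ) 1, f (a + h * θ)

lemma meanFrom_zero [CompleteSpace E] (f : ℝ → E) (a : ℝ) : meanFrom f a 0 = f a := by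
  simp [meanFrom]

lemma continuous_meanFrom (hf : Continuous f) (a : ℝ) : Continuous (meanFrom f a) := by
  have eq_intervalIntegral : meanFrom f a = fun h => ∫ θ in (0 : ℝ)..1, f (a + h * θ) :=
    funext fun h => (intervalIntegral.integral_of_le zero_le_one).symm
  rw [eq_intervalIntegral]
  exact intervalIntegral.continuous_parametric_intervalIntegral_of_continuous' (by fun_prop) 0 1

lemma enorm_meanFrom_sub_meanFrom_half_rpow_le (hq : 1 ≤ q)
    (hf : Continuous f) (hfp : f.Periodic 1) (a : ℝ) {h : ℝ} (h0 : 0 < h) (h1 : h ≤ 1) :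
    ‖meanFrom f a h - meanFrom f a (h / 2)‖ₑ ^ q ≤
      ENNReal.ofReal (2 * h ^ (q - 2)) * gagliardoPow q f := by
  have hq0 : 0 ≤ q := by linarith
  have hm : Measurable fun p : ℝ × ℝ => ‖diffQuot f (a + h * p.1, a + h / 2 * p.2)‖ₑ ^ q :=
    ((measurable_diffQuot hf).comp (by fun_prop)).enorm.pow_const q
  have coeff_eq : ENNReal.ofReal h ^ q * (ENNReal.ofReal (h / 2)⁻¹ * ENNReal.ofReal h⁻¹) =
      ENNReal.ofReal (2 * h ^ (q - 2)) := by
    rw [ENNReal.ofReal_rpow_of_nonneg h0.le hq0, ← ENNReal.ofReal_mul (by positivity),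
      ← ENNReal.ofReal_mul (by positivity), Real.rpow_sub h0, Real.rpow_two]
    congr 1
    field_simp
  set μ := volume.restrict (Ioc (0 : ℝ) 1)
  calc ‖meanFrom f a h - meanFrom f a (h / 2)‖ₑ ^ q
      ≤ ∫⁻ p, ‖f (a + h * p.1) - f (a + h / 2 * p.2)‖ₑ ^ q ∂(μ.prod μ) :=
        enorm_integral_sub_integral_rpow_le hq (integrableOn_comp_add_mul hf a h)
          (integrableOn_comp_add_mul hf a (h / 2))
    _ ≤ ∫⁻ p, ENNReal.ofReal h ^ q * ‖diffQuot f (a + h * p.1, a + h / 2 * p.2)‖ₑ ^ q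
          ∂(μ.prod μ) := by
        rw [Measure.prod_restrict]
        refine setLIntegral_mono' (measurableSet_Ioc.prod measurableSet_Ioc) ?_
        rintro ⟨θ, φ⟩ ⟨⟨hθ0, hθ1⟩, ⟨hφ0, hφ1⟩⟩
        rw [← ENNReal.mul_rpow_of_nonneg _ _ hq0]
        refine ENNReal.rpow_le_rpow (enorm_sub_le_mul_diffQuot hfp (abs_le.2 ?_)) hq0
        constructor <;> nlinarith
    _ ≤ ENNReal.ofReal h ^ q *
          (ENNReal.ofReal (h / 2)⁻¹ * (ENNReal.ofReal h⁻¹ * gagliardoPow q f)) := by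
        rw [lintegral_const_mul _ hm, lintegral_prod_symm _ hm.aemeasurable]
        gcongr
        exact lintegral_diffQuot_comp_le hf hfp a h0 h1
    _ = ENNReal.ofReal (2 * h ^ (q - 2)) * gagliardoPow q f := by
        rw [← coeff_eq]
        ring

lemma dist_meanFrom_meanFrom_half_le (hq : 1 ≤ q) (hf : Continuous f)
    (hfp : f.Periodic 1) (hS : gagliardoPow q f < ⊤) (a : ℝ) {h : ℝ} (h0 : 0 < h) (h1 : h ≤ 1) :
    dist (meanFrom f a h) (meanFrom f a (h / 2)) ≤
      2 ^ (1 / q) * (gagliardoPow q f).toReal ^ (1 / q) * h ^ (1 - 2 / q) := by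
  have hq0 : 0 < q := by linarith
  have rpow_le := ENNReal.toReal_mono (ENNReal.mul_ne_top ENNReal.ofReal_ne_top hS.ne)
    (enorm_meanFrom_sub_meanFrom_half_rpow_le hq hf hfp a h0 h1)
  rw [← ENNReal.toReal_rpow, toReal_enorm, ENNReal.toReal_mul,
    ENNReal.toReal_ofReal (by positivity)] at rpow_le
  have root_eq : (2 * h ^ (q - 2) * (gagliardoPow q f).toReal) ^ (1 / q) =
      2 ^ (1 / q) * (gagliardoPow q f).toReal ^ (1 / q) * h ^ (1 - 2 / q) := by
    rw [Real.mul_rpow (by positivity) (by positivity), Real.mul_rpow (by positivity)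
      (by positivity), ← Real.rpow_mul h0.le, show (q - 2) * (1 / q) = 1 - 2 / q by field_simp]
    ring
  rwa [dist_eq_norm, ← root_eq, one_div,
    Real.le_rpow_inv_iff_of_pos (norm_nonneg _) (by positivity) hq0]

lemma norm_meanFrom_one_le (hq : 1 ≤ q) (hf : Continuous f) (hfp : f.Periodic 1) (a : ℝ) :
    ‖meanFrom f a 1‖ ≤ (∫ x in Ioc (0 : ℝ) 1, ‖f x‖ ^ q) ^ (1 / q) := by
  have hq0 : 0 < q := by linarith
  have integral_nonneg : 0 ≤ ∫ x in Ioc (0 : ℝ) 1, ‖f x‖ ^ q :=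
    integral_nonneg fun x => by positivity
  have integrable : IntegrableOn (fun x => ‖f x‖ ^ q) (Ioc 0 1) :=
    (hf.norm.rpow_const fun _ => Or.inr hq0.le).integrableOn_Ioc
  have jensen : ‖meanFrom f a 1‖ₑ ^ q ≤ ∫⁻ θ in Ioc (0 : ℝ) 1, ‖f (a + 1 * θ)‖ₑ ^ q :=
    enorm_integral_rpow_le hq (by fun_prop)
  have shift : ∫⁻ θ in Ioc (0 : ℝ) 1, ‖f (a + 1 * θ)‖ₑ ^ q = ∫⁻ x in Ioc (0 : ℝ) 1, ‖f x‖ₑ ^ q := by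
    have periodic : Function.Periodic (fun x => ‖f x‖ₑ ^ q) 1 := fun x => by simp only [hfp x]
    simpa [lintegral_Ioc_comp_const_add (fun x => ‖f x‖ₑ ^ q)] using
      lintegral_Ioc_add_one_eq periodic a 0
  have lintegral_eq : ∫⁻ x in Ioc (0 : ℝ) 1, ‖f x‖ₑ ^ q =
      ENNReal.ofReal (∫ x in Ioc (0 : ℝ) 1, ‖f x‖ ^ q) := by
    rw [ofReal_integral_eq_lintegral_ofReal integrable (ae_of_all _ fun x => by positivity)]
    simp only [← ENNReal.ofReal_rpow_of_nonneg (norm_nonneg _) hq0.le, ofReal_norm]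
  rw [shift, lintegral_eq, ← ofReal_norm, ENNReal.ofReal_rpow_of_nonneg (norm_nonneg _) hq0.le,
    ENNReal.ofReal_le_ofReal_iff integral_nonneg] at jensen
  rwa [one_div, Real.le_rpow_inv_iff_of_pos (norm_nonneg _) integral_nonneg hq0]

/-- The constant in the Morrey inequality on the circle: the sum of the geometric series that
arises when the means over `[a, a + 2⁻ᵏ]` are telescoped. -/
def morreyConst (q : ℝ) : ℝ := 2 ^ (1 / q) / (1 - (1 / 2) ^ (1 - 2 / q))

lemma half_rpow_lt_one (hq : 2 < q) : (1 / 2 : ℝ) ^ (1 - 2 / q) < 1 :=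
  Real.rpow_lt_one (by norm_num) (by norm_num)
    (sub_pos.2 ((div_lt_one (by linarith)).2 hq))

lemma morreyConst_pos (hq : 2 < q) : 0 < morreyConst q :=
  div_pos (by positivity) (sub_pos.2 (half_rpow_lt_one hq))

lemma norm_le_add_morreyConst_mul [CompleteSpace E] (hq : 2 < q) (hf : Continuous f)
    (hfp : f.Periodic 1) (hS : gagliardoPow q f < ⊤) (a : ℝ) :
    ‖f a‖ ≤ (∫ x in Ioc (0 : ℝ) 1, ‖f x‖ ^ q) ^ (1 / q) +
      morreyConst q * (gagliardoPow q f).toReal ^ (1 / q) := by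
  have hq1 : 1 ≤ q := by linarith
  set r : ℝ := (1 / 2) ^ (1 - 2 / q) with hr
  have dyadic_step (k : ℕ) :
      dist (meanFrom f a ((1 / 2) ^ k)) (meanFrom f a ((1 / 2) ^ (k + 1))) ≤
        2 ^ (1 / q) * (gagliardoPow q f).toReal ^ (1 / q) * r ^ k := by
    have rpow_eq : ((1 / 2 : ℝ) ^ k) ^ (1 - 2 / q) = r ^ k := by
      rw [hr, ← Real.rpow_natCast, ← Real.rpow_natCast, ← Real.rpow_mul (by norm_num),
        ← Real.rpow_mul (by norm_num), mul_comm]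
    rw [← rpow_eq, pow_succ, mul_one_div]
    exact dist_meanFrom_meanFrom_half_le hq1 hf hfp hS a (by positivity)
      (pow_le_one₀ (by norm_num) (by norm_num))
  have tendsto_apply : Tendsto (fun k : ℕ => meanFrom f a ((1 / 2) ^ k)) atTop (𝓝 (f a)) := by
    rw [← meanFrom_zero f a]
    exact (continuous_meanFrom hf a).continuousAt.tendsto.comp
      (tendsto_pow_atTop_nhds_zero_of_lt_one (by norm_num) (by norm_num))
  have dist_le := dist_le_of_le_geometric_of_tendsto₀ r _ (half_rpow_lt_one hq) dyadic_step
    tendsto_apply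
  calc ‖f a‖ ≤ ‖meanFrom f a 1‖ + dist (meanFrom f a 1) (f a) := by
        rw [dist_eq_norm_sub']
        exact norm_le_norm_add_norm_sub' _ _
    _ ≤ _ := by
        refine add_le_add (norm_meanFrom_one_le hq1 hf hfp a) (le_trans ?_ (dist_le.trans_eq ?_))
        · rw [pow_zero]
        · rw [morreyConst]
          ring

end MorreyEmbedding

section Wedge

variable {E : Type*} [NormedAddCommGroup E] [InnerProductSpace ℝ E] [FiniteDimensional ℝ E]

lemma inner_ιMulti_two (a b c d : E) :
    ⟪exteriorPower.ιMulti ℝ 2 ![a, b], exteriorPower.ιMulti ℝ 2 ![c, d]⟫ =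
      ⟪a, c⟫ * ⟪b, d⟫ - ⟪a, d⟫ * ⟪b, c⟫ := by
  rw [exteriorPower.inner_ιMulti_ιMulti, Matrix.det_fin_two]
  simp [mul_comm ⟪b, c⟫]

lemma norm_ιMulti_two_sq (a b : E) :
    ‖exteriorPower.ιMulti ℝ 2 ![a, b]‖ ^ 2 = ‖a‖ ^ 2 * ‖b‖ ^ 2 - ⟪a, b⟫ ^ 2 := by
  rw [← real_inner_self_eq_norm_sq, inner_ιMulti_two, real_inner_self_eq_norm_sq,
    real_inner_self_eq_norm_sq, real_inner_comm a b, sq ⟪a, b⟫]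

lemma norm_ιMulti_two_le (a b : E) : ‖exteriorPower.ιMulti ℝ 2 ![a, b]‖ ≤ ‖a‖ * ‖b‖ := by
  refine abs_le_of_sq_le_sq' ?_ (by positivity) |>.2
  rw [norm_ιMulti_two_sq, mul_pow]
  exact sub_le_self _ (sq_nonneg _)

/-- The wedge product `a ∧ b ∈ ⋀² E` as a continuous bilinear map. -/
def wedge : E →L[ℝ] E →L[ℝ] ⋀[ℝ]^2 E :=
  (LinearMap.mk₂ ℝ (fun a b => exteriorPower.ιMulti ℝ 2 ![a, b])
    (fun _ _ _ => Subtype.ext (by simp [add_mul])) (fun _ _ _ => Subtype.ext (by simp))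
    (fun _ _ _ => Subtype.ext (by simp [mul_add])) (fun _ _ _ => Subtype.ext (by simp))
    ).mkContinuous₂ 1 fun a b => by simpa using norm_ιMulti_two_le a b

lemma inner_wedge_wedge (a b c d : E) :
    ⟪wedge a b, wedge c d⟫ = ⟪a, c⟫ * ⟪b, d⟫ - ⟪a, d⟫ * ⟪b, c⟫ :=
  inner_ιMulti_two a b c d

lemma norm_wedge_sq (a b : E) : ‖wedge a b‖ ^ 2 = ‖a‖ ^ 2 * ‖b‖ ^ 2 - ⟪a, b⟫ ^ 2 :=
  norm_ιMulti_two_sq a b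

lemma norm_wedge_le (a b : E) : ‖wedge a b‖ ≤ ‖a‖ * ‖b‖ :=
  norm_ιMulti_two_le a b

lemma wedge_self (a : E) : wedge a a = 0 :=
  Subtype.ext (by simp [wedge])

lemma wedge_swap (a b : E) : wedge b a = -wedge a b := by
  have := wedge_self (a + b)
  simp only [map_add, add_apply, wedge_self, zero_add, add_zero] at this
  exact eq_neg_of_add_eq_zero_left this

end Wedge

section TangentPointIntegrands

variable {n : ℕ} {q : ℝ} {u v w : ℝ → EuclideanSpace ℝ (Fin n)}

lemma rpow_eq_rpow_sub_one_mul {x : ℝ} (hq : q ≠ 0) (hx : 0 ≤ x) :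
    x ^ q = x ^ (q - 1) * x := by
  rw [← Real.rpow_add_one' hx (by simpa using hq), sub_add_cancel]

lemma wedgeSq_rpow_half (a b : EuclideanSpace ℝ (Fin n)) (r : ℝ) :
    wedgeSq a b ^ (r / 2) = ‖wedge a b‖ ^ r := by
  rw [wedgeSq, ← norm_wedge_sq, ← Real.rpow_natCast_mul (norm_nonneg _)]
  congr 1
  push_cast
  ring

/-- The tangent-point quotient `|u'(y) ∧ (u(x) - u(y))| / |u(x) - u(y)|²`, equal to `0` where
`u(x) = u(y)`; its `q`-th power is the integrand of `TP`. -/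
def tpQuot (u : ℝ → EuclideanSpace ℝ (Fin n)) (p : ℝ × ℝ) : ℝ :=
  ‖wedge (deriv u p.2) (u p.1 - u p.2)‖ / ‖u p.1 - u p.2‖ ^ 2

lemma tpQuot_nonneg (u : ℝ → EuclideanSpace ℝ (Fin n)) (p : ℝ × ℝ) : 0 ≤ tpQuot u p := by
  unfold tpQuot
  positivity

lemma norm_wedge_rpow_div_eq_tpQuot_rpow (q : ℝ) (u : ℝ → EuclideanSpace ℝ (Fin n))
    (p : ℝ × ℝ) :
    ‖wedge (deriv u p.2) (u p.1 - u p.2)‖ ^ q / ‖u p.1 - u p.2‖ ^ (2 * q) = tpQuot u p ^ q := by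
  rw [tpQuot, Real.div_rpow (norm_nonneg _) (sq_nonneg _), Real.rpow_mul (norm_nonneg _),
    Real.rpow_two]

lemma wedge_sub_eq_wedge_taylorRem (u : ℝ → EuclideanSpace ℝ (Fin n)) (p : ℝ × ℝ) :
    wedge (deriv u p.2) (u p.1 - u p.2) = wedge (deriv u p.2) (taylorRem u p) := by
  simp [taylorRem, wedge_self]

lemma Mintegrand_eq (q : ℝ) (u v w : ℝ → EuclideanSpace ℝ (Fin n)) (p : ℝ × ℝ) :
    Mintegrand q u v w p =
      ‖wedge (deriv u p.2) (u p.1 - u p.2)‖ ^ (q - 2) / ‖u p.1 - u p.2‖ ^ (2 * q) *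
        ⟪wedge (deriv u p.2) (u p.1 - u p.2), wedge (deriv v p.2) (taylorRem w p)⟫ := by
  rw [Mintegrand, wedgeSq_rpow_half, wedgeInner, ← inner_wedge_wedge, taylorRem]

lemma Aintegrand_eq (q : ℝ) (u v w : ℝ → EuclideanSpace ℝ (Fin n)) (p : ℝ × ℝ) :
    Aintegrand q u v w p =
      ‖wedge (deriv u p.2) (u p.1 - u p.2)‖ ^ q / ‖u p.1 - u p.2‖ ^ (2 * q + 2) *
        ⟪v p.1 - v p.2, w p.1 - w p.2⟫ := by
  rw [Aintegrand, wedgeSq_rpow_half]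

lemma abs_Mintegrand_le (hq : 1 < q) (u v w : ℝ → EuclideanSpace ℝ (Fin n)) (p : ℝ × ℝ) :
    |Mintegrand q u v w p| ≤
      tpQuot u p ^ (q - 1) * (‖deriv v p.2‖ * (‖taylorRem w p‖ / ‖u p.1 - u p.2‖ ^ 2)) := by
  rw [Mintegrand_eq, tpQuot]
  set ω := wedge (deriv u p.2) (u p.1 - u p.2)
  set d := ‖u p.1 - u p.2‖
  have hd : 0 ≤ d := norm_nonneg _
  have inner_le : |⟪ω, wedge (deriv v p.2) (taylorRem w p)⟫| ≤
      ‖ω‖ * (‖deriv v p.2‖ * ‖taylorRem w p‖) :=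
    (abs_real_inner_le_norm _ _).trans
      (mul_le_mul_of_nonneg_left (norm_wedge_le _ _) (norm_nonneg _))
  have norm_rpow : ‖ω‖ ^ (q - 2) * ‖ω‖ = ‖ω‖ ^ (q - 1) := by
    rw [← Real.rpow_add_one' (norm_nonneg _) (by linarith)]
    ring_nf
  have denominator_rpow : d ^ (2 * q) = (d ^ 2) ^ (q - 1) * d ^ 2 := by
    rw [Real.rpow_mul hd, Real.rpow_two, rpow_eq_rpow_sub_one_mul (by linarith) (sq_nonneg d)]
  calc |‖ω‖ ^ (q - 2) / d ^ (2 * q) * ⟪ω, wedge (deriv v p.2) (taylorRem w p)⟫|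
      ≤ ‖ω‖ ^ (q - 2) / d ^ (2 * q) * (‖ω‖ * (‖deriv v p.2‖ * ‖taylorRem w p‖)) := by
        rw [abs_mul, abs_of_nonneg (by positivity)]
        gcongr
    _ = ‖ω‖ ^ (q - 2) * ‖ω‖ / d ^ (2 * q) * (‖deriv v p.2‖ * ‖taylorRem w p‖) := by ring
    _ = (‖ω‖ / d ^ 2) ^ (q - 1) * (‖deriv v p.2‖ * (‖taylorRem w p‖ / d ^ 2)) := by
        rw [norm_rpow, denominator_rpow, Real.div_rpow (norm_nonneg _) (sq_nonneg d)]
        ring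

lemma abs_Aintegrand_le (hq : 0 < q) (u w : ℝ → EuclideanSpace ℝ (Fin n)) (p : ℝ × ℝ) :
    |Aintegrand q u u w p| ≤ tpQuot u p ^ q * (‖w p.1 - w p.2‖ / ‖u p.1 - u p.2‖) := by
  rw [Aintegrand_eq, ← norm_wedge_rpow_div_eq_tpQuot_rpow]
  set ω := wedge (deriv u p.2) (u p.1 - u p.2)
  have denominator_rpow : ‖u p.1 - u p.2‖ ^ (2 * q + 2) =
      ‖u p.1 - u p.2‖ ^ (2 * q) * ‖u p.1 - u p.2‖ ^ 2 := by
    rw [Real.rpow_add' (norm_nonneg _) (by positivity), Real.rpow_two]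
  calc |‖ω‖ ^ q / ‖u p.1 - u p.2‖ ^ (2 * q + 2) * ⟪u p.1 - u p.2, w p.1 - w p.2⟫|
      ≤ ‖ω‖ ^ q / ‖u p.1 - u p.2‖ ^ (2 * q + 2) * (‖u p.1 - u p.2‖ * ‖w p.1 - w p.2‖) := by
        rw [abs_mul, abs_of_nonneg (by positivity)]
        gcongr
        exact abs_real_inner_le_norm _ _
    _ = ‖ω‖ ^ q / ‖u p.1 - u p.2‖ ^ (2 * q) *
          (‖u p.1 - u p.2‖ / ‖u p.1 - u p.2‖ ^ 2 * ‖w p.1 - w p.2‖) := by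
        rw [denominator_rpow]
        ring
    _ = ‖ω‖ ^ q / ‖u p.1 - u p.2‖ ^ (2 * q) * (‖w p.1 - w p.2‖ / ‖u p.1 - u p.2‖) := by
        rw [sq, div_self_mul_self', inv_mul_eq_div]

variable {B L K : ℝ}

lemma norm_taylorRem_div_le (hup : u.Periodic 1)
    (hB : ∀ x y, circDist x y ≤ B * ‖u x - u y‖) (w : ℝ → EuclideanSpace ℝ (Fin n))
    (p : ℝ × ℝ) : ‖taylorRem w p‖ / ‖u p.1 - u p.2‖ ^ 2 ≤ B ^ 2 * taylorQuot w p := by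
  rcases (circDist_nonneg p.1 p.2).eq_or_lt with h0 | hpos
  · simp [eq_of_circDist_eq_zero hup h0.symm, taylorQuot, ← h0]
  · have hd : 0 < ‖u p.1 - u p.2‖ := norm_sub_pos_iff.2 fun h => by
      simpa [h] using hpos.trans_le (hB p.1 p.2)
    rw [taylorQuot, mul_div_left_comm]
    refine (mul_one_div _ _).symm.le.trans (mul_le_mul_of_nonneg_left ?_ (norm_nonneg _))
    rw [div_le_div_iff₀ (by positivity) (by positivity), one_mul, ← mul_pow]
    exact pow_le_pow_left₀ hpos.le (hB _ _) 2

lemma tpQuot_le (hup : u.Periodic 1) (hB : ∀ x y, circDist x y ≤ B * ‖u x - u y‖)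
    (hL : ∀ x, ‖deriv u x‖ ≤ L) (p : ℝ × ℝ) : tpQuot u p ≤ B ^ 2 * L * taylorQuot u p :=
  calc tpQuot u p ≤ L * ‖taylorRem u p‖ / ‖u p.1 - u p.2‖ ^ 2 := by
        rw [tpQuot, wedge_sub_eq_wedge_taylorRem]
        gcongr
        exact (norm_wedge_le _ _).trans (by gcongr; exact hL p.2)
    _ = L * (‖taylorRem u p‖ / ‖u p.1 - u p.2‖ ^ 2) := mul_div_assoc _ _ _
    _ ≤ L * (B ^ 2 * taylorQuot u p) :=
        mul_le_mul_of_nonneg_left (norm_taylorRem_div_le hup hB u p)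
          ((norm_nonneg _).trans (hL 0))
    _ = B ^ 2 * L * taylorQuot u p := by ring

lemma abs_Mintegrand_le_taylorQuot (hq : 1 < q) (hup : u.Periodic 1)
    (hB : ∀ x y, circDist x y ≤ B * ‖u x - u y‖) (hL : ∀ x, ‖deriv u x‖ ≤ L)
    (hK : ∀ x, ‖deriv v x‖ ≤ K) (w : ℝ → EuclideanSpace ℝ (Fin n)) (p : ℝ × ℝ) :
    |Mintegrand q u v w p| ≤
      (B ^ 2 * L * taylorQuot u p) ^ (q - 1) * (B ^ 2 * K * taylorQuot w p) :=
  calc |Mintegrand q u v w p|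
      ≤ tpQuot u p ^ (q - 1) * (‖deriv v p.2‖ * (‖taylorRem w p‖ / ‖u p.1 - u p.2‖ ^ 2)) :=
        abs_Mintegrand_le hq u v w p
    _ ≤ (B ^ 2 * L * taylorQuot u p) ^ (q - 1) * (K * (B ^ 2 * taylorQuot w p)) := by
        have hK0 : 0 ≤ K := (norm_nonneg _).trans (hK 0)
        have hLρ := (tpQuot_nonneg u p).trans (tpQuot_le hup hB hL p)
        have : 0 ≤ q - 1 := by linarith
        gcongr
        exacts [tpQuot_nonneg u p, tpQuot_le hup hB hL p, hK p.2,
          norm_taylorRem_div_le hup hB w p]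
    _ = _ := by ring

lemma norm_sub_div_norm_sub_le (hB0 : 0 ≤ B)
    (hB : ∀ x y, circDist x y ≤ B * ‖u x - u y‖)
    (hw : ∀ x y, ‖w x - w y‖ ≤ K * circDist x y) (hK : 0 ≤ K) (x y : ℝ) :
    ‖w x - w y‖ / ‖u x - u y‖ ≤ B * K := by
  refine div_le_of_le_mul₀ (norm_nonneg _) (by positivity) ((hw x y).trans ?_)
  calc K * circDist x y ≤ K * (B * ‖u x - u y‖) := mul_le_mul_of_nonneg_left (hB x y) hK
    _ = B * K * ‖u x - u y‖ := by ring

end TangentPointIntegrands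

section CurveBounds

lemma one_le_mul_integral_norm_rpow {F : Type*} [NormedAddCommGroup F] {f : ℝ → F} {B q : ℝ}
    (hq : 0 < q) (hf : Continuous f) (hB : 0 ≤ B) (h : ∀ x, 1 ≤ B * ‖f x‖) :
    1 ≤ B * (∫ x in Ioc (0 : ℝ) 1, ‖f x‖ ^ q) ^ (1 / q) := by
  have hB0 : 0 < B := hB.lt_of_ne fun h0 => by simpa [← h0] using (h 0).trans_lt' one_pos
  have integrable : IntegrableOn (fun x => ‖f x‖ ^ q) (Ioc (0 : ℝ) 1) :=
    ((hf.norm.rpow_const fun _ => Or.inr hq.le).integrableOn_Icc).mono_set Ioc_subset_Icc_self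
  have rpow_le_integral : (1 / B) ^ q ≤ ∫ x in Ioc (0 : ℝ) 1, ‖f x‖ ^ q := by
    simpa using setIntegral_mono_on (f := fun _ => (1 / B) ^ q) (by simp) integrable
      measurableSet_Ioc fun x _ => Real.rpow_le_rpow (by positivity)
        ((div_le_iff₀' hB0).2 (h x)) hq.le
  rw [← div_le_iff₀' hB0, one_div q]
  exact (Real.le_rpow_inv_iff_of_pos (by positivity)
    (integral_nonneg fun x => by positivity) hq).2 rpow_le_integral

section NormedSpace

variable {E : Type*} [NormedAddCommGroup E] [NormedSpace ℝ E] {u w : ℝ → E}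
  {B K L t : ℝ}

lemma norm_sub_le_mul_circDist (hu : Differentiable ℝ u) (hup : u.Periodic 1)
    (hL : ∀ x, ‖deriv u x‖ ≤ L) (x y : ℝ) : ‖u x - u y‖ ≤ L * circDist x y := by
  have mean_value : ‖u (y + wrap (x - y)) - u y‖ ≤ L * ‖y + wrap (x - y) - y‖ :=
    convex_univ.norm_image_sub_le_of_norm_deriv_le (fun z _ => hu z) (fun z _ => hL z)
      (mem_univ y) (mem_univ _)
  rwa [apply_add_wrap_sub hup, add_sub_cancel_left, Real.norm_eq_abs, ← circDist_eq_abs_wrap]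
    at mean_value

lemma one_le_mul_norm_deriv (hu : Differentiable ℝ u)
    (hB : ∀ x y, circDist x y ≤ B * ‖u x - u y‖) (y : ℝ) : 1 ≤ B * ‖deriv u y‖ := by
  refine ge_of_tendsto ((hu y).hasDerivAt.tendsto_slope_zero.norm.const_mul B) ?_
  have near : ∀ᶠ s : ℝ in 𝓝[≠] 0, s ∈ Ioc (-(1 / 2)) (1 / 2) :=
    nhdsWithin_le_nhds (Ioc_mem_nhds (by norm_num) (by norm_num))
  filter_upwards [near, self_mem_nhdsWithin] with s hs hs0
  have hs_pos : 0 < |s| := abs_pos.2 hs0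
  rw [norm_smul, norm_inv, Real.norm_eq_abs, mul_left_comm, inv_mul_eq_div, one_le_div hs_pos]
  simpa only [circDist_add_left_self hs] using hB (y + s) y

/-- The radius of a ball of parameters `t` on which `u + t w` stays uniformly bi-Lipschitz, when
`B` bounds the bi-Lipschitz constant of `u` and `K` the norm of `w'`. -/
def stableRadius (B K : ℝ) : ℝ := 1 / (1 + 2 * (B * K))

lemma stableRadius_pos (hB : 0 ≤ B) (hK : 0 ≤ K) : 0 < stableRadius B K := by
  unfold stableRadius
  positivity

lemma stableRadius_le_one (hB : 0 ≤ B) (hK : 0 ≤ K) : stableRadius B K ≤ 1 :=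
  div_le_self zero_le_one (le_add_of_nonneg_right (by positivity))

lemma stableRadius_mul_le (hB : 0 ≤ B) (hK : 0 ≤ K) : stableRadius B K * (B * K) ≤ 1 / 2 := by
  have : 0 ≤ B * K := mul_nonneg hB hK
  rw [stableRadius, div_mul_eq_mul_div, div_le_div_iff₀ (by positivity) two_pos]
  linarith

lemma circDist_le_two_mul_of_abs_le (hB0 : 0 ≤ B) (hB : ∀ x y, circDist x y ≤ B * ‖u x - u y‖)
    (hw : Differentiable ℝ w) (hwp : w.Periodic 1) (hK : ∀ x, ‖deriv w x‖ ≤ K)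
    (ht : |t| ≤ stableRadius B K) (x y : ℝ) :
    circDist x y ≤ 2 * B * ‖(u + t • w) x - (u + t • w) y‖ := by
  have hK0 : 0 ≤ K := (norm_nonneg _).trans (hK 0)
  have hd := circDist_nonneg x y
  have norm_le : ‖u x - u y‖ ≤ ‖(u + t • w) x - (u + t • w) y‖ + ‖t • (w x - w y)‖ := by
    have : u x - u y = (u + t • w) x - (u + t • w) y - t • (w x - w y) := by
      simp only [Pi.add_apply, Pi.smul_apply]
      module
    rw [this]
    exact norm_sub_le _ _
  have perturbation_le : B * ‖t • (w x - w y)‖ ≤ 1 / 2 * circDist x y :=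
    calc B * ‖t • (w x - w y)‖ ≤ B * (stableRadius B K * (K * circDist x y)) := by
          rw [norm_smul]
          have := (stableRadius_pos hB0 hK0).le
          gcongr
          exacts [ht, norm_sub_le_mul_circDist hw hwp hK x y]
      _ = stableRadius B K * (B * K) * circDist x y := by ring
      _ ≤ 1 / 2 * circDist x y := mul_le_mul_of_nonneg_right (stableRadius_mul_le hB0 hK0) hd
  linarith [hB x y, mul_le_mul_of_nonneg_left norm_le hB0]

lemma norm_deriv_add_smul_le (hu : Differentiable ℝ u) (hw : Differentiable ℝ w)
    (hL : ∀ x, ‖deriv u x‖ ≤ L) (hK : ∀ x, ‖deriv w x‖ ≤ K) (ht : |t| ≤ 1) (x : ℝ) :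
    ‖deriv (u + t • w) x‖ ≤ L + K := by
  rw [deriv_add_smul hu hw]
  refine (norm_add_le _ _).trans (add_le_add (hL x) ?_)
  rw [norm_smul]
  exact (mul_le_of_le_one_left (norm_nonneg _) ht).trans (hK x)

end NormedSpace

variable {n : ℕ} {u : ℝ → EuclideanSpace ℝ (Fin n)}

lemma circDist_le_bil_mul (hb : bil u < ⊤) (x y : ℝ) :
    circDist x y ≤ (bil u).toReal * ‖u x - u y‖ := by
  by_cases h0 : circDist x y = 0
  · rw [h0]
    positivity
  have quotient_le : ENNReal.ofReal (circDist x y) / ENNReal.ofReal ‖u x - u y‖ ≤ bil u :=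
    le_iSup_of_le x (le_iSup_of_le y (le_iSup_of_le h0 le_rfl))
  have dist_pos : 0 < circDist x y := (circDist_nonneg x y).lt_of_ne' h0
  have norm_pos : 0 < ‖u x - u y‖ := by
    refine (norm_nonneg _).lt_of_ne' fun h => hb.not_ge ?_
    simpa [h, ENNReal.div_zero, dist_pos.not_ge] using quotient_le
  rwa [← ENNReal.ofReal_div_of_pos norm_pos, ← ENNReal.ofReal_toReal hb.ne,
    ENNReal.ofReal_le_ofReal_iff ENNReal.toReal_nonneg, div_le_iff₀ norm_pos] at quotient_le

lemma norm_deriv_le_linfD (hu : ContDiff ℝ 1 u) (hup : u.Periodic 1) (x : ℝ) :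
    ‖deriv u x‖ ≤ (linfD u).toReal := by
  obtain ⟨M, hM⟩ := ((deriv_periodic hup).isBounded_of_continuous one_ne_zero
    (hu.continuous_deriv le_rfl)).exists_norm_le
  have finite : linfD u ≠ ⊤ := ne_top_of_le_ne_top ENNReal.ofReal_ne_top <| iSup_le fun y => by
    rw [← enorm_eq_nnnorm, ← ofReal_norm]
    exact ENNReal.ofReal_le_ofReal (hM _ (mem_range_self y))
  simpa using ENNReal.toReal_mono finite (le_iSup (fun y => (‖deriv u y‖₊ : ℝ≥0∞)) x)

lemma linfD_toReal_le {M : ℝ} (hM : ∀ x, ‖deriv u x‖ ≤ M) : (linfD u).toReal ≤ M := by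
  refine ENNReal.toReal_le_of_le_ofReal ((norm_nonneg _).trans (hM 0)) (iSup_le fun x => ?_)
  rw [← enorm_eq_nnnorm, ← ofReal_norm]
  exact ENNReal.ofReal_le_ofReal (hM x)

end CurveBounds

section PointwiseDerivative

lemma hasDerivAt_norm_rpow_div {F G : Type*} [NormedAddCommGroup F] [InnerProductSpace ℝ F]
    [NormedAddCommGroup G] [InnerProductSpace ℝ G] {ω : ℝ → F} {d : ℝ → G} {ω' : F} {d' : G}
    {q t : ℝ} (hq : 1 < q) (hω : HasDerivAt ω ω' t) (hd : HasDerivAt d d' t) (h0 : d t ≠ 0) :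
    HasDerivAt (fun s => ‖ω s‖ ^ q / ‖d s‖ ^ (2 * q))
      (q * (‖ω t‖ ^ (q - 2) / ‖d t‖ ^ (2 * q) * ⟪ω t, ω'⟫ -
        2 * (‖ω t‖ ^ q / ‖d t‖ ^ (2 * q + 2) * ⟪d t, d'⟫))) t := by
  have norm_pos : 0 < ‖d t‖ := norm_pos_iff.2 h0
  have numerator := (hasFDerivAt_norm_rpow (ω t) hq).comp_hasDerivAt t hω
  have denominator :=
    (hasFDerivAt_norm_rpow (d t) (by linarith : 1 < 2 * q)).comp_hasDerivAt t hd
  refine (numerator.div denominator (Real.rpow_pos_of_pos norm_pos _).ne').congr_deriv ?_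
  have rpow_add_two : ‖d t‖ ^ (2 * q + 2) = ‖d t‖ ^ (2 * q) * ‖d t‖ ^ 2 := by
    rw [Real.rpow_add norm_pos, Real.rpow_two]
  have rpow_sub_two : ‖d t‖ ^ (2 * q - 2) = ‖d t‖ ^ (2 * q) / ‖d t‖ ^ 2 := by
    rw [Real.rpow_sub norm_pos, Real.rpow_two]
  simp only [Function.comp_apply, smul_apply, innerSL_apply_apply, smul_eq_mul,
    rpow_add_two, rpow_sub_two]
  field_simp

lemma hasDerivAt_add_smul {E : Type*} [NormedAddCommGroup E] [NormedSpace ℝ E] (a b : E) (t : ℝ) :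
    HasDerivAt (fun s : ℝ => a + s • b) b t := by
  simpa using ((hasDerivAt_id t).smul_const b).const_add a

variable {n : ℕ} {q : ℝ} {u w : ℝ → EuclideanSpace ℝ (Fin n)}

/-- The integrand of the first variation `δTP(u)[w] = M(u; u, w) + M(u; w, u) - 2 A(u; u, w)`. -/
def firstVarIntegrand (q : ℝ) (u w : ℝ → EuclideanSpace ℝ (Fin n)) (p : ℝ × ℝ) : ℝ :=
  Mintegrand q u u w p + Mintegrand q u w u p - 2 * Aintegrand q u u w p

lemma wedge_taylorRem_add_wedge_taylorRem (u w : ℝ → EuclideanSpace ℝ (Fin n)) (p : ℝ × ℝ) :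
    wedge (deriv u p.2) (taylorRem w p) + wedge (deriv w p.2) (taylorRem u p) =
      wedge (deriv u p.2) (w p.1 - w p.2) + wedge (deriv w p.2) (u p.1 - u p.2) := by
  simp only [taylorRem, map_sub, map_smul, wedge_swap (deriv u p.2) (deriv w p.2)]
  module

lemma firstVarIntegrand_eq (q : ℝ) (u w : ℝ → EuclideanSpace ℝ (Fin n)) (p : ℝ × ℝ) :
    firstVarIntegrand q u w p =
      ‖wedge (deriv u p.2) (u p.1 - u p.2)‖ ^ (q - 2) / ‖u p.1 - u p.2‖ ^ (2 * q) *
        ⟪wedge (deriv u p.2) (u p.1 - u p.2),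
          wedge (deriv u p.2) (w p.1 - w p.2) + wedge (deriv w p.2) (u p.1 - u p.2)⟫ -
      2 * (‖wedge (deriv u p.2) (u p.1 - u p.2)‖ ^ q / ‖u p.1 - u p.2‖ ^ (2 * q + 2) *
        ⟪u p.1 - u p.2, w p.1 - w p.2⟫) := by
  simp only [firstVarIntegrand, Mintegrand_eq, Aintegrand_eq]
  rw [← wedge_taylorRem_add_wedge_taylorRem, inner_add_right]
  ring

lemma hasDerivAt_tpQuot_rpow (hq : 1 < q) (hu : Differentiable ℝ u) (hw : Differentiable ℝ w)
    {t : ℝ} {p : ℝ × ℝ} (hp : (u + t • w) p.1 ≠ (u + t • w) p.2) :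
    HasDerivAt (fun s : ℝ => tpQuot (u + s • w) p ^ q)
      (q * firstVarIntegrand q (u + t • w) w p) t := by
  have deriv_tangent : HasDerivAt (fun s : ℝ => deriv (u + s • w) p.2) (deriv w p.2) t := by
    simp only [deriv_add_smul hu hw]
    exact hasDerivAt_add_smul _ _ t
  have deriv_chord : HasDerivAt (fun s : ℝ => (u + s • w) p.1 - (u + s • w) p.2)
      (w p.1 - w p.2) t :=
    (hasDerivAt_add_smul (u p.1) (w p.1) t).sub (hasDerivAt_add_smul (u p.2) (w p.2) t)
  simp only [← norm_wedge_rpow_div_eq_tpQuot_rpow, firstVarIntegrand_eq]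
  exact hasDerivAt_norm_rpow_div hq
    (wedge.hasDerivAt_of_bilinear (fun _ => deriv_tangent) (fun _ => deriv_chord))
    deriv_chord (sub_ne_zero.2 hp)

lemma hasDerivAt_tpQuot_rpow_of_eq (hq : 0 < q) {p : ℝ × ℝ} (hu : u p.1 = u p.2)
    (hw : w p.1 = w p.2) (t : ℝ) :
    HasDerivAt (fun s : ℝ => tpQuot (u + s • w) p ^ q)
      (q * firstVarIntegrand q (u + t • w) w p) t := by
  have tpQuot_eq_zero (s : ℝ) : tpQuot (u + s • w) p = 0 := by simp [tpQuot, hu, hw]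
  have firstVarIntegrand_eq_zero : firstVarIntegrand q (u + t • w) w p = 0 := by
    simp [firstVarIntegrand_eq, hu, hw]
  simpa only [tpQuot_eq_zero, firstVarIntegrand_eq_zero, Real.zero_rpow hq.ne', mul_zero]
    using hasDerivAt_const t (0 : ℝ)

end PointwiseDerivative

section Hoelder

variable {α : Type*} [MeasurableSpace α] {μ : Measure α} {f g : α → ℝ} {q : ℝ}

lemma integrable_rpow_of_memLp (hq : 0 < q) (hf : MemLp f (ENNReal.ofReal q) μ)
    (hf0 : ∀ x, 0 ≤ f x) : Integrable (fun x => f x ^ q) μ := by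
  simpa only [Real.norm_of_nonneg (hf0 _), ENNReal.toReal_ofReal hq.le] using
    hf.integrable_norm_rpow (ENNReal.ofReal_pos.2 hq).ne' ENNReal.ofReal_ne_top

lemma memLp_rpow_sub_one (hq : 1 < q) (hf : MemLp f (ENNReal.ofReal q) μ) (hf0 : ∀ x, 0 ≤ f x) :
    MemLp (fun x => f x ^ (q - 1)) (ENNReal.ofReal (q / (q - 1))) μ := by
  have hq1 : 0 < q - 1 := sub_pos.2 hq
  simpa only [Real.norm_of_nonneg (hf0 _), ENNReal.ofReal_div_of_pos hq1,
    ENNReal.toReal_ofReal hq1.le] using hf.norm_rpow_div (ENNReal.ofReal (q - 1))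

lemma integrable_rpow_sub_one_mul (hq : 1 < q) (hf : MemLp f (ENNReal.ofReal q) μ)
    (hg : MemLp g (ENNReal.ofReal q) μ) (hf0 : ∀ x, 0 ≤ f x) :
    Integrable (fun x => f x ^ (q - 1) * g x) μ := by
  have : ENNReal.HolderConjugate (ENNReal.ofReal (q / (q - 1))) (ENNReal.ofReal q) :=
    (Real.HolderConjugate.conjExponent hq).symm.ennrealOfReal
  exact (memLp_rpow_sub_one hq hf hf0).integrable_mul hg

lemma integral_rpow_sub_one_mul_le (hq : 1 < q) (hf : MemLp f (ENNReal.ofReal q) μ)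
    (hg : MemLp g (ENNReal.ofReal q) μ) (hf0 : ∀ x, 0 ≤ f x) (hg0 : ∀ x, 0 ≤ g x) :
    ∫ x, f x ^ (q - 1) * g x ∂μ ≤
      ((∫ x, f x ^ q ∂μ) ^ (1 / q)) ^ (q - 1) * (∫ x, g x ^ q ∂μ) ^ (1 / q) := by
  have hq1 : 0 < q - 1 := sub_pos.2 hq
  have holder := integral_mul_le_Lp_mul_Lq_of_nonneg (Real.HolderConjugate.conjExponent hq).symm
    (ae_of_all μ fun x => Real.rpow_nonneg (hf0 x) (q - 1)) (ae_of_all μ hg0)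
    (memLp_rpow_sub_one hq hf hf0) hg
  have rpow_rpow (x : α) : (f x ^ (q - 1)) ^ (q / (q - 1)) = f x ^ q := by
    rw [← Real.rpow_mul (hf0 x), mul_div_cancel₀ q hq1.ne']
  have exponent : 1 / (q / (q - 1)) = 1 / q * (q - 1) := by field_simp
  simpa only [Real.conjExponent, rpow_rpow, exponent,
    Real.rpow_mul (integral_nonneg fun x => Real.rpow_nonneg (hf0 x) q)] using holder

end Hoelder

section DifferentiationUnderIntegral

variable {n : ℕ} {q : ℝ} {u v w : ℝ → EuclideanSpace ℝ (Fin n)}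

lemma continuous_wedge_deriv_sub (hu : ContDiff ℝ 1 u) :
    Continuous fun p : ℝ × ℝ => wedge (deriv u p.2) (u p.1 - u p.2) := by
  have := hu.continuous
  have := hu.continuous_deriv le_rfl
  fun_prop

lemma measurable_norm_sub (hu : Continuous u) : Measurable fun p : ℝ × ℝ => ‖u p.1 - u p.2‖ :=
  (by fun_prop : Continuous _).measurable

lemma measurable_tpQuot (hu : ContDiff ℝ 1 u) : Measurable (tpQuot u) :=
  (continuous_wedge_deriv_sub hu).norm.measurable.div
    ((measurable_norm_sub hu.continuous).pow_const 2)

lemma measurable_Mintegrand (q : ℝ) (hu : ContDiff ℝ 1 u) (hv : ContDiff ℝ 1 v)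
    (hw : ContDiff ℝ 1 w) : Measurable (Mintegrand q u v w) := by
  have := hu.continuous
  have := hu.continuous_deriv le_rfl
  have := hv.continuous_deriv le_rfl
  have := (stronglyMeasurable_taylorRem hw).measurable
  have inner_measurable : Measurable fun p =>
      ⟪wedge (deriv u p.2) (u p.1 - u p.2), wedge (deriv v p.2) (taylorRem w p)⟫ := by
    simp only [inner_wedge_wedge]
    fun_prop
  rw [funext (Mintegrand_eq q u v w)]
  exact (((continuous_wedge_deriv_sub hu).norm.measurable.pow_const _).div
    ((measurable_norm_sub hu.continuous).pow_const _)).mul inner_measurable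

lemma measurable_Aintegrand (q : ℝ) (hu : ContDiff ℝ 1 u) (hv : Continuous v)
    (hw : Continuous w) : Measurable (Aintegrand q u v w) := by
  have inner_continuous : Continuous fun p : ℝ × ℝ => ⟪v p.1 - v p.2, w p.1 - w p.2⟫ := by
    fun_prop
  rw [funext (Aintegrand_eq q u v w)]
  exact (((continuous_wedge_deriv_sub hu).norm.measurable.pow_const _).div
    ((measurable_norm_sub hu.continuous).pow_const _)).mul inner_continuous.measurable

lemma measurable_firstVarIntegrand (q : ℝ) (hu : ContDiff ℝ 1 u) (hw : ContDiff ℝ 1 w) :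
    Measurable (firstVarIntegrand q u w) :=
  ((measurable_Mintegrand q hu hu hw).add (measurable_Mintegrand q hu hw hu)).sub
    ((measurable_Aintegrand q hu hu.continuous hw.continuous).const_mul 2)

lemma TPr_eq_integral (hq : 0 < q) (hu : ContDiff ℝ 1 u) :
    TPr q u = 1 / q * ∫ p in unitSq, tpQuot u p ^ q := by
  have tpQuot_rpow_nonneg (p : ℝ × ℝ) : 0 ≤ tpQuot u p ^ q :=
    Real.rpow_nonneg (tpQuot_nonneg u p) q
  rw [integral_eq_lintegral_of_nonneg_ae (ae_of_all _ tpQuot_rpow_nonneg)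
    ((measurable_tpQuot hu).pow_const q).aestronglyMeasurable, TPr, TPe, ENNReal.toReal_mul,
    ENNReal.toReal_ofReal (by positivity)]
  simp only [wedgeSq_rpow_half, norm_wedge_rpow_div_eq_tpQuot_rpow]

variable {B L K : ℝ}

lemma abs_Aintegrand_le_taylorQuot (hq : 0 < q) (hup : u.Periodic 1) (hB0 : 0 ≤ B)
    (hB : ∀ x y, circDist x y ≤ B * ‖u x - u y‖) (hL : ∀ x, ‖deriv u x‖ ≤ L)
    (hw : Differentiable ℝ w) (hwp : w.Periodic 1) (hK : ∀ x, ‖deriv w x‖ ≤ K) (p : ℝ × ℝ) :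
    |Aintegrand q u u w p| ≤ (B ^ 2 * L * taylorQuot u p) ^ q * (B * K) := by
  refine (abs_Aintegrand_le hq u w p).trans ?_
  have := tpQuot_nonneg u p
  have := this.trans (tpQuot_le hup hB hL p)
  gcongr
  exacts [tpQuot_le hup hB hL p, norm_sub_div_norm_sub_le hB0 hB
    (norm_sub_le_mul_circDist hw hwp hK) ((norm_nonneg _).trans (hK 0)) p.1 p.2]

lemma abs_firstVarIntegrand_le (hq : 1 < q) (hup : u.Periodic 1) (hB0 : 0 ≤ B)
    (hB : ∀ x y, circDist x y ≤ B * ‖u x - u y‖) (hL : ∀ x, ‖deriv u x‖ ≤ L)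
    (hw : Differentiable ℝ w) (hwp : w.Periodic 1) (hK : ∀ x, ‖deriv w x‖ ≤ K) (hKL : K ≤ L)
    {p : ℝ × ℝ} {G : ℝ} (huG : taylorQuot u p ≤ G) (hwG : taylorQuot w p ≤ G) :
    |firstVarIntegrand q u w p| ≤ (2 + 2 * (B * K)) * (B ^ 2 * L * G) ^ q := by
  have hK0 : 0 ≤ K := (norm_nonneg _).trans (hK 0)
  have hL0 : 0 ≤ L := hK0.trans hKL
  have hu0 := taylorQuot_nonneg u p
  have hw0 := taylorQuot_nonneg w p
  have hG0 : 0 ≤ G := hu0.trans huG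
  have : 0 ≤ q - 1 := by linarith
  have rpow_eq : (B ^ 2 * L * G) ^ (q - 1) * (B ^ 2 * L * G) = (B ^ 2 * L * G) ^ q :=
    (rpow_eq_rpow_sub_one_mul (by linarith) (by positivity)).symm
  have bound_uuw : |Mintegrand q u u w p| ≤ (B ^ 2 * L * G) ^ q :=
    calc |Mintegrand q u u w p|
        ≤ (B ^ 2 * L * taylorQuot u p) ^ (q - 1) * (B ^ 2 * L * taylorQuot w p) :=
          abs_Mintegrand_le_taylorQuot hq hup hB hL hL w p
      _ ≤ (B ^ 2 * L * G) ^ (q - 1) * (B ^ 2 * L * G) := by gcongr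
      _ = (B ^ 2 * L * G) ^ q := rpow_eq
  have bound_uwu : |Mintegrand q u w u p| ≤ (B ^ 2 * L * G) ^ q :=
    calc |Mintegrand q u w u p|
        ≤ (B ^ 2 * L * taylorQuot u p) ^ (q - 1) * (B ^ 2 * K * taylorQuot u p) :=
          abs_Mintegrand_le_taylorQuot hq hup hB hL hK u p
      _ ≤ (B ^ 2 * L * G) ^ (q - 1) * (B ^ 2 * L * G) := by gcongr
      _ = (B ^ 2 * L * G) ^ q := rpow_eq
  have bound_A : |Aintegrand q u u w p| ≤ (B ^ 2 * L * G) ^ q * (B * K) :=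
    (abs_Aintegrand_le_taylorQuot (by linarith) hup hB0 hB hL hw hwp hK p).trans (by gcongr)
  rw [abs_le] at bound_uuw bound_uwu bound_A ⊢
  constructor <;> unfold firstVarIntegrand <;> linarith

lemma integrable_tpQuot_rpow (hq : 1 < q) (hu : ContDiff ℝ 1 u) (hup : u.Periodic 1)
    (hB : ∀ x y, circDist x y ≤ B * ‖u x - u y‖) (hL : ∀ x, ‖deriv u x‖ ≤ L)
    (hρ : MemLp (taylorQuot u) (ENNReal.ofReal q) (volume.restrict unitSq)) :
    Integrable (fun p => tpQuot u p ^ q) (volume.restrict unitSq) :=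
  integrable_rpow_of_memLp (by linarith)
    ((hρ.const_mul (B ^ 2 * L)).of_le (measurable_tpQuot hu).aestronglyMeasurable
      (ae_of_all _ fun p => by
        rw [Real.norm_of_nonneg (tpQuot_nonneg u p)]
        exact (tpQuot_le hup hB hL p).trans (Real.le_norm_self _)))
    (tpQuot_nonneg u)

/-- The integrable dominating function in the differentiation of `t ↦ TP(u + t w)`. -/
def firstVarBound (q B L K : ℝ) (u w : ℝ → EuclideanSpace ℝ (Fin n)) (p : ℝ × ℝ) : ℝ :=
  (2 + 2 * (2 * B * K)) * ((2 * B) ^ 2 * (L + K) * (taylorQuot u p + taylorQuot w p)) ^ q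

lemma integrable_firstVarBound (hq : 0 < q) (hL0 : 0 ≤ L) (hK0 : 0 ≤ K)
    (hu : MemLp (taylorQuot u) (ENNReal.ofReal q) (volume.restrict unitSq))
    (hw : MemLp (taylorQuot w) (ENNReal.ofReal q) (volume.restrict unitSq)) :
    Integrable (firstVarBound q B L K u w) (volume.restrict unitSq) :=
  (integrable_rpow_of_memLp hq ((hu.add hw).const_mul _) fun p => by
    have := taylorQuot_nonneg u p
    have := taylorQuot_nonneg w p
    simp only [Pi.add_apply]
    positivity).const_mul _

lemma abs_firstVarIntegrand_add_smul_le (hq : 1 < q) (hu : Differentiable ℝ u)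
    (hup : u.Periodic 1) (hw : Differentiable ℝ w) (hwp : w.Periodic 1) (hB0 : 0 ≤ B)
    (hB : ∀ x y, circDist x y ≤ B * ‖u x - u y‖) (hL : ∀ x, ‖deriv u x‖ ≤ L)
    (hK : ∀ x, ‖deriv w x‖ ≤ K) {t : ℝ} (ht : |t| ≤ stableRadius B K) (p : ℝ × ℝ) :
    |firstVarIntegrand q (u + t • w) w p| ≤ firstVarBound q B L K u w p := by
  have hL0 : 0 ≤ L := (norm_nonneg _).trans (hL 0)
  have hK0 : 0 ≤ K := (norm_nonneg _).trans (hK 0)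
  have ht1 : |t| ≤ 1 := ht.trans (stableRadius_le_one hB0 hK0)
  exact abs_firstVarIntegrand_le hq (hup.add (hwp.smul t)) (by positivity)
    (circDist_le_two_mul_of_abs_le hB0 hB hw hwp hK ht) (norm_deriv_add_smul_le hu hw hL hK ht1)
    hw hwp hK (le_add_of_nonneg_left hL0) (taylorQuot_add_smul_le hu hw ht1 p)
    (le_add_of_nonneg_left (taylorQuot_nonneg u p))

lemma hasDerivAt_tpQuot_rpow_of_abs_le (hq : 1 < q) (hu : Differentiable ℝ u)
    (hup : u.Periodic 1) (hw : Differentiable ℝ w) (hwp : w.Periodic 1) (hB0 : 0 ≤ B)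
    (hB : ∀ x y, circDist x y ≤ B * ‖u x - u y‖) (hK : ∀ x, ‖deriv w x‖ ≤ K) {t : ℝ}
    (ht : |t| ≤ stableRadius B K) (p : ℝ × ℝ) :
    HasDerivAt (fun s : ℝ => tpQuot (u + s • w) p ^ q)
      (q * firstVarIntegrand q (u + t • w) w p) t := by
  by_cases h0 : circDist p.1 p.2 = 0
  · exact hasDerivAt_tpQuot_rpow_of_eq (by linarith) (eq_of_circDist_eq_zero hup h0)
      (eq_of_circDist_eq_zero hwp h0) t
  · refine hasDerivAt_tpQuot_rpow hq hu hw fun h => h0 ((circDist_nonneg _ _).antisymm' ?_)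
    simpa [h] using circDist_le_two_mul_of_abs_le hB0 hB hw hwp hK ht p.1 p.2

lemma hasDerivAt_TPr (hq : 1 < q) (hu : ContDiff ℝ 1 u) (hup : u.Periodic 1)
    (hw : ContDiff ℝ 1 w) (hwp : w.Periodic 1) (hB0 : 0 ≤ B)
    (hB : ∀ x y, circDist x y ≤ B * ‖u x - u y‖)
    (hL : ∀ x, ‖deriv u x‖ ≤ L) (hK : ∀ x, ‖deriv w x‖ ≤ K)
    (hρu : MemLp (taylorQuot u) (ENNReal.ofReal q) (volume.restrict unitSq))
    (hρw : MemLp (taylorQuot w) (ENNReal.ofReal q) (volume.restrict unitSq)) :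
    HasDerivAt (fun t : ℝ => TPr q (u + t • w)) (∫ p in unitSq, firstVarIntegrand q u w p) 0 := by
  have hq0 : 0 < q := by linarith
  have hL0 : 0 ≤ L := (norm_nonneg _).trans (hL 0)
  have hK0 : 0 ≤ K := (norm_nonneg _).trans (hK 0)
  have hud := hu.differentiable one_ne_zero
  have hwd := hw.differentiable one_ne_zero
  have abs_le_radius {t : ℝ} (ht : t ∈ Metric.ball 0 (stableRadius B K)) :
      |t| ≤ stableRadius B K := by
    simpa using (Metric.mem_ball.1 ht).le
  have contDiff (t : ℝ) : ContDiff ℝ 1 (u + t • w) := hu.add (hw.const_smul t)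
  have hasDerivAt_integral := hasDerivAt_integral_of_dominated_loc_of_deriv_le
    (μ := volume.restrict unitSq) (F := fun t p => tpQuot (u + t • w) p ^ q)
    (F' := fun t p => q * firstVarIntegrand q (u + t • w) w p)
    (bound := fun p => q * firstVarBound q B L K u w p)
    (Metric.ball_mem_nhds 0 (stableRadius_pos hB0 hK0))
    (Eventually.of_forall fun t =>
      ((measurable_tpQuot (contDiff t)).pow_const q).aestronglyMeasurable)
    (by simpa using integrable_tpQuot_rpow hq hu hup hB hL hρu)
    ((measurable_firstVarIntegrand q (contDiff 0) hw).const_mul q).aestronglyMeasurable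
    (ae_of_all _ fun p t ht => by
      rw [norm_mul, Real.norm_of_nonneg hq0.le]
      gcongr
      exact abs_firstVarIntegrand_add_smul_le hq hud hup hwd hwp hB0 hB hL hK (abs_le_radius ht) p)
    ((integrable_firstVarBound hq0 hL0 hK0 hρu hρw).const_mul q)
    (ae_of_all _ fun p t ht =>
      hasDerivAt_tpQuot_rpow_of_abs_le hq hud hup hwd hwp hB0 hB hK (abs_le_radius ht) p)
  simp only [fun t => TPr_eq_integral hq0 (contDiff t)]
  refine (hasDerivAt_integral.2.const_mul (1 / q)).congr_deriv ?_
  simp only [zero_smul, add_zero, integral_const_mul]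
  field_simp

end DifferentiationUnderIntegral

section FirstVariationEstimate

variable {n : ℕ} {q B L K : ℝ} {u v w : ℝ → EuclideanSpace ℝ (Fin n)}

lemma integrable_Mintegrand (hq : 1 < q) (hu : ContDiff ℝ 1 u) (hup : u.Periodic 1)
    (hv : ContDiff ℝ 1 v) (hw : ContDiff ℝ 1 w) (hB : ∀ x y, circDist x y ≤ B * ‖u x - u y‖)
    (hL : ∀ x, ‖deriv u x‖ ≤ L) (hK : ∀ x, ‖deriv v x‖ ≤ K)
    (hρu : MemLp (taylorQuot u) (ENNReal.ofReal q) (volume.restrict unitSq))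
    (hρw : MemLp (taylorQuot w) (ENNReal.ofReal q) (volume.restrict unitSq)) :
    Integrable (Mintegrand q u v w) (volume.restrict unitSq) :=
  (integrable_rpow_sub_one_mul hq (hρu.const_mul (B ^ 2 * L)) (hρw.const_mul (B ^ 2 * K))
    fun p => (tpQuot_nonneg u p).trans (tpQuot_le hup hB hL p)).mono'
    (measurable_Mintegrand q hu hv hw).aestronglyMeasurable
    (ae_of_all _ (abs_Mintegrand_le_taylorQuot hq hup hB hL hK w))

lemma abs_Mfun_le (hq : 1 < q) (hup : u.Periodic 1)
    (hB : ∀ x y, circDist x y ≤ B * ‖u x - u y‖) (hL : ∀ x, ‖deriv u x‖ ≤ L)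
    (hK : ∀ x, ‖deriv v x‖ ≤ K)
    (hρu : MemLp (taylorQuot u) (ENNReal.ofReal q) (volume.restrict unitSq))
    (hρw : MemLp (taylorQuot w) (ENNReal.ofReal q) (volume.restrict unitSq)) :
    |Mfun q u v w| ≤ (B ^ 2 * L) ^ (q - 1) * (B ^ 2 * K) *
      (((∫ p in unitSq, taylorQuot u p ^ q) ^ (1 / q)) ^ (q - 1) *
        (∫ p in unitSq, taylorQuot w p ^ q) ^ (1 / q)) := by
  have hL0 : 0 ≤ L := (norm_nonneg _).trans (hL 0)
  have hK0 : 0 ≤ K := (norm_nonneg _).trans (hK 0)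
  have abs_integrand_le (p : ℝ × ℝ) : |Mintegrand q u v w p| ≤
      (B ^ 2 * L) ^ (q - 1) * (B ^ 2 * K) * (taylorQuot u p ^ (q - 1) * taylorQuot w p) := by
    refine (abs_Mintegrand_le_taylorQuot hq hup hB hL hK w p).trans_eq ?_
    rw [Real.mul_rpow (by positivity) (taylorQuot_nonneg u p)]
    ring
  have integrable := (integrable_rpow_sub_one_mul hq hρu hρw (taylorQuot_nonneg u)).const_mul
    ((B ^ 2 * L) ^ (q - 1) * (B ^ 2 * K))
  refine (norm_integral_le_of_norm_le (f := Mintegrand q u v w) integrable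
    (ae_of_all _ abs_integrand_le)).trans ?_
  rw [integral_const_mul]
  gcongr
  exact integral_rpow_sub_one_mul_le hq hρu hρw (taylorQuot_nonneg u) (taylorQuot_nonneg w)

lemma integrable_Aintegrand (hq : 0 < q) (hu : ContDiff ℝ 1 u) (hup : u.Periodic 1)
    (hw : ContDiff ℝ 1 w) (hwp : w.Periodic 1) (hB0 : 0 ≤ B)
    (hB : ∀ x y, circDist x y ≤ B * ‖u x - u y‖) (hL : ∀ x, ‖deriv u x‖ ≤ L)
    (hK : ∀ x, ‖deriv w x‖ ≤ K)
    (hρu : MemLp (taylorQuot u) (ENNReal.ofReal q) (volume.restrict unitSq)) :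
    Integrable (Aintegrand q u u w) (volume.restrict unitSq) :=
  ((integrable_rpow_of_memLp hq (hρu.const_mul (B ^ 2 * L))
    fun p => (tpQuot_nonneg u p).trans (tpQuot_le hup hB hL p)).mul_const (B * K)).mono'
    (measurable_Aintegrand q hu hu.continuous hw.continuous).aestronglyMeasurable
    (ae_of_all _ (abs_Aintegrand_le_taylorQuot hq hup hB0 hB hL
      (hw.differentiable one_ne_zero) hwp hK))

lemma abs_Afun_le (hq : 0 < q) (hup : u.Periodic 1) (hw : Differentiable ℝ w)
    (hwp : w.Periodic 1) (hB0 : 0 ≤ B) (hB : ∀ x y, circDist x y ≤ B * ‖u x - u y‖)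
    (hL : ∀ x, ‖deriv u x‖ ≤ L) (hK : ∀ x, ‖deriv w x‖ ≤ K)
    (hρu : MemLp (taylorQuot u) (ENNReal.ofReal q) (volume.restrict unitSq)) :
    |Afun q u u w| ≤ (B ^ 2 * L) ^ (q - 1) * (B ^ 3 * L * K) *
      (((∫ p in unitSq, taylorQuot u p ^ q) ^ (1 / q)) ^ (q - 1) *
        (∫ p in unitSq, taylorQuot u p ^ q) ^ (1 / q)) := by
  have hL0 : 0 ≤ L := (norm_nonneg _).trans (hL 0)
  have abs_integrand_le (p : ℝ × ℝ) : |Aintegrand q u u w p| ≤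
      (B ^ 2 * L) ^ q * (B * K) * taylorQuot u p ^ q := by
    refine (abs_Aintegrand_le_taylorQuot hq hup hB0 hB hL hw hwp hK p).trans_eq ?_
    rw [Real.mul_rpow (by positivity) (taylorQuot_nonneg u p)]
    ring
  have integrable := (integrable_rpow_of_memLp hq hρu (taylorQuot_nonneg u)).const_mul
    ((B ^ 2 * L) ^ q * (B * K))
  have integral_nonneg : 0 ≤ ∫ p in unitSq, taylorQuot u p ^ q :=
    integral_nonneg fun p => Real.rpow_nonneg (taylorQuot_nonneg u p) q
  calc |Afun q u u w| ≤ ∫ p in unitSq, (B ^ 2 * L) ^ q * (B * K) * taylorQuot u p ^ q :=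
        norm_integral_le_of_norm_le (f := Aintegrand q u u w) integrable
          (ae_of_all _ abs_integrand_le)
    _ = (B ^ 2 * L) ^ q * (B * K) * ((∫ p in unitSq, taylorQuot u p ^ q) ^ (1 / q)) ^ q := by
        rw [integral_const_mul, one_div, Real.rpow_inv_rpow integral_nonneg hq.ne']
    _ = _ := by
        rw [rpow_eq_rpow_sub_one_mul hq.ne' (by positivity : 0 ≤ B ^ 2 * L),
          rpow_eq_rpow_sub_one_mul hq.ne' (Real.rpow_nonneg integral_nonneg (1 / q))]
        ring

lemma deltaTP_eq_integral (hq : 1 < q) (hu : ContDiff ℝ 1 u) (hup : u.Periodic 1)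
    (hw : ContDiff ℝ 1 w) (hwp : w.Periodic 1) (hB0 : 0 ≤ B)
    (hB : ∀ x y, circDist x y ≤ B * ‖u x - u y‖) (hL : ∀ x, ‖deriv u x‖ ≤ L)
    (hK : ∀ x, ‖deriv w x‖ ≤ K)
    (hρu : MemLp (taylorQuot u) (ENNReal.ofReal q) (volume.restrict unitSq))
    (hρw : MemLp (taylorQuot w) (ENNReal.ofReal q) (volume.restrict unitSq)) :
    deltaTP q u w = ∫ p in unitSq, firstVarIntegrand q u w p := by
  have integrable_uuw := integrable_Mintegrand hq hu hup hu hw hB hL hL hρu hρw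
  have integrable_uwu := integrable_Mintegrand hq hu hup hw hu hB hL hK hρu hρu
  have integrable_A :=
    integrable_Aintegrand (by linarith) hu hup hw hwp hB0 hB hL hK hρu
  unfold firstVarIntegrand
  rw [integral_sub (by exact integrable_uuw.add integrable_uwu) (integrable_A.const_mul 2),
    integral_add integrable_uuw integrable_uwu, integral_const_mul]
  rfl

lemma memLp_taylorQuot_of_sobSemPow (hq : 1 ≤ q) (hu : ContDiff ℝ 1 u) (hup : u.Periodic 1)
    (hS : sobSemPow (1 - 1 / q) q (deriv u) < ⊤) :
    MemLp (taylorQuot u) (ENNReal.ofReal q) (volume.restrict unitSq) :=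
  memLp_taylorQuot hq hu hup (by rwa [← sobSemPow_eq_gagliardoPow (by linarith)])

lemma integral_taylorQuot_rpow_le_Wnorm (hq : 1 ≤ q) (hu : ContDiff ℝ 1 u) (hup : u.Periodic 1)
    (hS : sobSemPow (1 - 1 / q) q (deriv u) < ⊤) :
    (∫ p in unitSq, taylorQuot u p ^ q) ^ (1 / q) ≤ Wnorm (1 - 1 / q) q (deriv u) := by
  have integral_nonneg : 0 ≤ ∫ p in unitSq, taylorQuot u p ^ q :=
    integral_nonneg fun p => Real.rpow_nonneg (taylorQuot_nonneg u p) q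
  rw [sobSemPow_eq_gagliardoPow (by linarith)] at hS
  rw [Wnorm, sobSemPow_eq_gagliardoPow (by linarith)]
  exact (Real.rpow_le_rpow integral_nonneg (integral_taylorQuot_rpow_le hq hu hup hS)
    (by positivity)).trans (le_add_of_nonneg_left (by positivity))

lemma Wnorm_nonneg (s q : ℝ) (f : ℝ → EuclideanSpace ℝ (Fin n)) : 0 ≤ Wnorm s q f := by
  unfold Wnorm
  positivity

lemma one_le_mul_Wnorm (hq : 0 < q) (hu : ContDiff ℝ 1 u) (hB0 : 0 ≤ B)
    (hB : ∀ x y, circDist x y ≤ B * ‖u x - u y‖) :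
    1 ≤ B * Wnorm (1 - 1 / q) q (deriv u) :=
  (one_le_mul_integral_norm_rpow hq (hu.continuous_deriv le_rfl) hB0
    (one_le_mul_norm_deriv (hu.differentiable one_ne_zero) hB)).trans
    (mul_le_mul_of_nonneg_left (le_add_of_nonneg_right (by positivity)) hB0)

lemma linfD_toReal_le_mul_Wnorm (hq : 2 < q) (hu : ContDiff ℝ 1 u) (hup : u.Periodic 1)
    (hS : sobSemPow (1 - 1 / q) q (deriv u) < ⊤) :
    (linfD u).toReal ≤ (1 + morreyConst q) * Wnorm (1 - 1 / q) q (deriv u) := by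
  have := morreyConst_pos hq
  rw [sobSemPow_eq_gagliardoPow (by linarith)] at hS
  rw [Wnorm, sobSemPow_eq_gagliardoPow (by linarith)]
  refine linfD_toReal_le fun x =>
    (norm_le_add_morreyConst_mul hq (hu.continuous_deriv le_rfl) (deriv_periodic hup) hS x).trans ?_
  have lq_nonneg : 0 ≤ (∫ x in Ioc (0 : ℝ) 1, ‖deriv u x‖ ^ q) ^ (1 / q) := by positivity
  have seminorm_nonneg : 0 ≤ (gagliardoPow q (deriv u)).toReal ^ (1 / q) := by positivity
  nlinarith

lemma rpow_mul_rpow_eq {N : ℝ} (hq : 1 < q) (hB : 0 ≤ B) (hL : 0 ≤ L) (hN : 0 ≤ N) :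
    B ^ (2 * q + 2) * L ^ (q + 1) * N ^ q =
      (B ^ 2 * L) ^ (q - 1) * (B ^ 4 * L ^ 2) * (N ^ (q - 1) * N) := by
  have rpow_B : B ^ (2 * q + 2) = (B ^ 2) ^ (q - 1) * B ^ 4 := by
    rw [show 2 * q + 2 = 2 * (q - 1) + (4 : ℕ) by push_cast; ring,
      Real.rpow_add_of_nonneg hB (by linarith) (by positivity), Real.rpow_mul hB, Real.rpow_two,
      Real.rpow_natCast]
  have rpow_L : L ^ (q + 1) = L ^ (q - 1) * L ^ 2 := by
    rw [show q + 1 = q - 1 + (2 : ℕ) by push_cast; ring,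
      Real.rpow_add_of_nonneg hL (by linarith) (by positivity), Real.rpow_natCast]
  rw [rpow_B, rpow_L, rpow_eq_rpow_sub_one_mul (by linarith) hN,
    Real.mul_rpow (by positivity) hL]
  ring

lemma abs_deltaTP_le {N V : ℝ} (hq : 1 < q) (hup : u.Periodic 1) (hw : Differentiable ℝ w)
    (hwp : w.Periodic 1) (hB0 : 0 ≤ B) (hB : ∀ x y, circDist x y ≤ B * ‖u x - u y‖)
    (hL : ∀ x, ‖deriv u x‖ ≤ L) (hK : ∀ x, ‖deriv w x‖ ≤ K) (hBL : 1 ≤ B * L) (hBN : 1 ≤ B * N)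
    (hρu : MemLp (taylorQuot u) (ENNReal.ofReal q) (volume.restrict unitSq))
    (hρw : MemLp (taylorQuot w) (ENNReal.ofReal q) (volume.restrict unitSq))
    (hN : (∫ p in unitSq, taylorQuot u p ^ q) ^ (1 / q) ≤ N)
    (hV : (∫ p in unitSq, taylorQuot w p ^ q) ^ (1 / q) ≤ V) :
    |deltaTP q u w| ≤ B ^ (2 * q + 2) * L ^ (q + 1) * N ^ q * (V + 3 * K) := by
  have hL0 : 0 ≤ L := (norm_nonneg _).trans (hL 0)
  have hK0 : 0 ≤ K := (norm_nonneg _).trans (hK 0)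
  have integral_u_nonneg : 0 ≤ ∫ p in unitSq, taylorQuot u p ^ q :=
    integral_nonneg fun p => Real.rpow_nonneg (taylorQuot_nonneg u p) q
  have integral_w_nonneg : 0 ≤ ∫ p in unitSq, taylorQuot w p ^ q :=
    integral_nonneg fun p => Real.rpow_nonneg (taylorQuot_nonneg w p) q
  have hN0 : 0 ≤ N := le_trans (by positivity) hN
  have hV0 : 0 ≤ V := le_trans (by positivity) hV
  have := sub_pos.2 hq
  rw [rpow_mul_rpow_eq hq hB0 hL0 hN0]
  set P := (B ^ 2 * L) ^ (q - 1)
  have : 0 ≤ P := by positivity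
  have bound_uuw : |Mfun q u u w| ≤ P * (B ^ 4 * L ^ 2) * (N ^ (q - 1) * N) * V :=
    calc |Mfun q u u w| ≤ P * (B ^ 2 * L) * (N ^ (q - 1) * V) :=
          (abs_Mfun_le hq hup hB hL hL hρu hρw).trans (by gcongr)
      _ ≤ P * (B ^ 2 * L) * (N ^ (q - 1) * V) * ((B * L) * (B * N)) :=
          le_mul_of_one_le_right (by positivity) (one_le_mul_of_one_le_of_one_le hBL hBN)
      _ = _ := by ring
  have bound_uwu : |Mfun q u w u| ≤ P * (B ^ 4 * L ^ 2) * (N ^ (q - 1) * N) * K :=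
    calc |Mfun q u w u| ≤ P * (B ^ 2 * K) * (N ^ (q - 1) * N) :=
          (abs_Mfun_le hq hup hB hL hK hρu hρu).trans (by gcongr)
      _ ≤ P * (B ^ 2 * K) * (N ^ (q - 1) * N) * ((B * L) * (B * L)) :=
          le_mul_of_one_le_right (by positivity) (one_le_mul_of_one_le_of_one_le hBL hBL)
      _ = _ := by ring
  have bound_A : |Afun q u u w| ≤ P * (B ^ 4 * L ^ 2) * (N ^ (q - 1) * N) * K :=
    calc |Afun q u u w| ≤ P * (B ^ 3 * L * K) * (N ^ (q - 1) * N) :=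
          (abs_Afun_le (by linarith) hup hw hwp hB0 hB hL hK hρu).trans (by gcongr)
      _ ≤ P * (B ^ 3 * L * K) * (N ^ (q - 1) * N) * (B * L) :=
          le_mul_of_one_le_right (by positivity) hBL
      _ = _ := by ring
  rw [abs_le] at bound_uuw bound_uwu bound_A ⊢
  constructor <;> unfold deltaTP <;> linarith

theorem first_variation_estimate_general (hq : 1 < q) (hu : ContDiff ℝ 1 u) (hup : u.Periodic 1)
    (hb : bil u < ⊤) (hS : sobSemPow (1 - 1 / q) q (deriv u) < ⊤)
    (hw : ContDiff ℝ 1 w) (hwp : w.Periodic 1)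
    (hT : sobSemPow (1 - 1 / q) q (deriv w) < ⊤) :
    HasDerivAt (fun t : ℝ => TPr q (fun x => u x + t • w x)) (deltaTP q u w) 0 ∧
      |deltaTP q u w| ≤
        (bil u).toReal ^ (2 * q + 2) * (linfD u).toReal ^ (q + 1) *
          Wnorm (1 - 1 / q) q (deriv u) ^ q *
          (Wnorm (1 - 1 / q) q (deriv w) + 3 * (linfD w).toReal) := by
  have hB0 : 0 ≤ (bil u).toReal := ENNReal.toReal_nonneg
  have hB := circDist_le_bil_mul hb
  have hL := norm_deriv_le_linfD hu hup
  have hK := norm_deriv_le_linfD hw hwp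
  have hρu := memLp_taylorQuot_of_sobSemPow hq.le hu hup hS
  have hρw := memLp_taylorQuot_of_sobSemPow hq.le hw hwp hT
  have hBL : 1 ≤ (bil u).toReal * (linfD u).toReal :=
    (one_le_mul_norm_deriv (hu.differentiable one_ne_zero) hB 0).trans
      (mul_le_mul_of_nonneg_left (hL 0) hB0)
  refine ⟨?_, abs_deltaTP_le hq hup (hw.differentiable one_ne_zero) hwp hB0 hB hL hK hBL
    (one_le_mul_Wnorm (by linarith) hu hB0 hB) hρu hρw
    (integral_taylorQuot_rpow_le_Wnorm hq.le hu hup hS)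
    (integral_taylorQuot_rpow_le_Wnorm hq.le hw hwp hT)⟩
  rw [deltaTP_eq_integral hq hu hup hw hwp hB0 hB hL hK hρu hρw]
  exact hasDerivAt_TPr hq hu hup hw hwp hB0 hB hL hK hρu hρw

end FirstVariationEstimate

/-- Proposition 3.9, first variation: `t ↦ TP(u + t w)` is
differentiable at `t = 0` with derivative `δTP(u)[w] = M(u;u,w) + M(u;w,u) - 2A(u;u,w)`,
and `|δTP(u)[w]| ≤ C (bil u)^{2q+2} ‖u'‖_{L^∞}^{q+1} ‖u'‖_{W^{1-1/q,q}}^q ‖w'‖_{W^{1-1/q,q}}`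
with `C = C(n, q)`. -/
theorem first_variation_estimate (n : ℕ) (q : ℝ) (hq : 2 < q) :
    ∃ C : ℝ, 0 < C ∧ ∀ u w : ℝ → EuclideanSpace ℝ (Fin n),
      ContDiff ℝ 1 u → Function.Periodic u 1 → Embedded u → Regular u →
      bil u < ⊤ → sobSemPow (1 - 1 / q) q (deriv u) < ⊤ →
      ContDiff ℝ 1 w → Function.Periodic w 1 →
      sobSemPow (1 - 1 / q) q (deriv w) < ⊤ →
      HasDerivAt (fun t : ℝ => TPr q (fun x => u x + t • w x)) (deltaTP q u w) 0 ∧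
      |deltaTP q u w| ≤
        C * (bil u).toReal ^ (2 * q + 2) * (linfD u).toReal ^ (q + 1) *
          Wnorm (1 - 1 / q) q (deriv u) ^ q * Wnorm (1 - 1 / q) q (deriv w) := by
  have := morreyConst_pos hq
  refine ⟨4 + 3 * morreyConst q, by positivity, fun u w hu hup _ _ hb hS hw hwp hT => ?_⟩
  obtain ⟨hasDerivAt, bound⟩ :=
    first_variation_estimate_general (by linarith) hu hup hb hS hw hwp hT
  have : 0 ≤ Wnorm (1 - 1 / q) q (deriv u) := Wnorm_nonneg _ _ _
  refine ⟨hasDerivAt, bound.trans ?_⟩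
  set X := (bil u).toReal ^ (2 * q + 2) * (linfD u).toReal ^ (q + 1) *
    Wnorm (1 - 1 / q) q (deriv u) ^ q
  calc X * (Wnorm (1 - 1 / q) q (deriv w) + 3 * (linfD w).toReal)
      ≤ X * (Wnorm (1 - 1 / q) q (deriv w) +
          3 * ((1 + morreyConst q) * Wnorm (1 - 1 / q) q (deriv w))) := by
        gcongr
        exact linfD_toReal_le_mul_Wnorm hq hw hwp hT
    _ = _ := by ring
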